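/- Suppose that every irreducible factor of the root system Φ is of type A_m, B_m, C_m, or D_m for some m (i.e., Φ contains no exceptional factor). Then for every J ⊆ Δ and every w ∈ W^J there exist t ≥ 0 and a sequence w_0, w_1, …, w_t in W with (w_0)^J = z^J and (w_t)^J = w, such that for every 1 ≤ i ≤ t either (w_i)^J = (u w_{i−1})^J for some u ∈ W_Ω, or both ℓ((w_{i−1})^J) < ℓ((w_i)^J) and (w_i)^J = (s w_{i−1})^J for some s ∈ S. -/

import Mathlib

/-! Common framework: a reduced (crystallographic) root system `Φ` in a real vector
space `V`, with Weyl group `W` (generated by the reflections `s_α`, `α ∈ Φ`, inside the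
group of linear automorphisms of `V`), a base `Δ` of simple roots with positive system
`Pos = Φ⁺`, and the associated combinatorics. -/

open scoped Classical Pointwise

namespace PaperSp

variable {V : Type} [AddCommGroup V] [Module ℝ V]

/-- The data of a reduced crystallographic root system in `V`:  a finite spanning set
`Phi` of nonzero vectors together with, for each root `α`, a linear functional
`pairing α = ⟨·, α∨⟩` taking the value `2` at `α`, such that the associated reflections
`s_α : β ↦ β − ⟨β, α∨⟩α` preserve `Phi`, all pairings are integral, and the only
multiples of a root `α` which are roots are `±α`. -/
structure RootSystemData (V : Type) [AddCommGroup V] [Module ℝ V] : Type where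
  Phi : Set V
  pairing : V → V →ₗ[ℝ] ℝ
  pairing_self : ∀ α, α ∈ Phi → pairing α α = 2
  finite : Phi.Finite
  span_top : Submodule.span ℝ Phi = ⊤
  zero_not_mem : (0 : V) ∉ Phi
  crystallographic : ∀ α ∈ Phi, ∀ β ∈ Phi, ∃ n : ℤ, pairing α β = (n : ℝ)
  reduced : ∀ α ∈ Phi, ∀ t : ℝ, t • α ∈ Phi → t = 1 ∨ t = -1
  reflect_mem : ∀ α ∈ Phi, ∀ β ∈ Phi, β - pairing α β • α ∈ Phi

/-- The reflection `s_α` associated to a root `α` (the identity if `α ∉ Φ`). -/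
noncomputable def RootSystemData.refl (R : RootSystemData V) (α : V) : V ≃ₗ[ℝ] V :=
  if h : α ∈ R.Phi then Module.reflection (R.pairing_self α h) else 1

/-- The set of reflections `{s_α : α ∈ K}` associated to a set `K` of roots. -/
noncomputable def refls (R : RootSystemData V) (K : Set V) : Set (V ≃ₗ[ℝ] V) :=
  {s | ∃ α ∈ K, s = R.refl α}

/-- The Weyl group `W`, generated by all reflections `s_α`, `α ∈ Φ`. -/
noncomputable def weylGroup (R : RootSystemData V) : Subgroup (V ≃ₗ[ℝ] V) :=
  Subgroup.closure (refls R R.Phi)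

/-- The subgroup `W_J` generated by the reflections `s_α`, `α ∈ J`. -/
noncomputable def WsubJ (R : RootSystemData V) (J : Set V) : Subgroup (V ≃ₗ[ℝ] V) :=
  Subgroup.closure (refls R J)

/-- The word length of `w` with respect to a generating set `S` of a group. -/
noncomputable def lengthWrt {G : Type*} [Group G] (S : Set G) (w : G) : ℕ :=
  sInf {n | ∃ ls : List G, ls.length = n ∧ (∀ x ∈ ls, x ∈ S) ∧ ls.prod = w}

/-- The length function `ℓ` on `W` with respect to the simple reflections
`S = {s_α : α ∈ Δ}`. -/
noncomputable def len (R : RootSystemData V) (Δ : Set V) (w : V ≃ₗ[ℝ] V) : ℕ :=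
  lengthWrt (refls R Δ) w

/-- `Pos` and `Δ` form a positive system with base `Δ` for the root system `R`:
`Φ = Pos ⊔ (−Pos)`, `Δ ⊆ Pos` is linearly independent, and every positive root is a
nonnegative integral combination of simple roots. -/
structure IsBase (R : RootSystemData V) (Pos Δ : Set V) : Prop where
  pos_sub : Pos ⊆ R.Phi
  mem_or_neg : ∀ α ∈ R.Phi, α ∈ Pos ∨ -α ∈ Pos
  not_both : ∀ α : V, ¬(α ∈ Pos ∧ -α ∈ Pos)
  delta_sub : Δ ⊆ Pos
  indep : LinearIndependent ℝ (fun a : Δ => (a : V))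
  decomp : ∀ β ∈ Pos, ∃ c : V →₀ ℕ, (c.support : Set V) ⊆ Δ ∧
    β = c.sum (fun a m => (m : ℝ) • a)

/-- The set `W^J = {w ∈ W : w(α) ∈ Φ⁺ for all α ∈ J}` of minimal length representatives
of `W/W_J`. -/
noncomputable def WupJ (R : RootSystemData V) (Pos : Set V) (J : Set V) :
    Set (V ≃ₗ[ℝ] V) :=
  {w | w ∈ weylGroup R ∧ ∀ α ∈ J, w α ∈ Pos}

/-- The set `V^J = W^J \ ⋃_{α ∈ Δ\J} W^{J∪{α}}`. -/
noncomputable def VupJ (R : RootSystemData V) (Pos Δ : Set V) (J : Set V) :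
    Set (V ≃ₗ[ℝ] V) :=
  {w | w ∈ WupJ R Pos J ∧ ∀ α ∈ Δ, α ∉ J → w ∉ WupJ R Pos (J ∪ {α})}

/-- `Φ_J(1) = Φ⁻ \ (Φ⁻ ∩ W_J·J)`. -/
noncomputable def PhiJone (R : RootSystemData V) (Pos : Set V) (J : Set V) : Set V :=
  (R.Phi \ Pos) \ {β | ∃ v ∈ WsubJ R J, ∃ α ∈ J, β = v α}

/-- `Φ_J(w) = w · Φ_J(1)`. -/
noncomputable def PhiJ (R : RootSystemData V) (Pos : Set V) (J : Set V)
    (w : V ≃ₗ[ℝ] V) : Set V :=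
  (fun x => w x) '' (PhiJone R Pos J)

/-- `hProjJ R Pos J pJ` says that `pJ` is the projection `w ↦ (w)^J` sending an element
of `W` to the unique element of `W^J` in the coset `w W_J`. -/
noncomputable def IsProjJ (R : RootSystemData V) (Pos : Set V) (J : Set V)
    (pJ : (V ≃ₗ[ℝ] V) → (V ≃ₗ[ℝ] V)) : Prop :=
  ∀ w ∈ weylGroup R, pJ w ∈ WupJ R Pos J ∧ (pJ w)⁻¹ * w ∈ WsubJ R J

/-- The product `s_i ⋯ s_1` of the first `i` members of a sequence in a group. -/
noncomputable def chainProd {G : Type*} [Group G] (s : ℕ → G) (i : ℕ) : G :=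
  (((List.range' 1 i).map s).reverse).prod

/-- The chain `w^(0) = w`, `w^(i) = (s_i ⋯ s_1 w)^J` associated to `w` and a sequence
of simple reflections. -/
noncomputable def chainElt {G : Type*} [Group G] (pJ : G → G) (s : ℕ → G) (w : G)
    (i : ℕ) : G :=
  if i = 0 then w else pJ (chainProd s i * w)

/-- The partial order `<_J`:  `w <_J w'` iff there are simple reflections
`s_1, …, s_r` (`r ≥ 1`) such that, with `w^(i) = (s_i ⋯ s_1 w)^J`, the lengths
`ℓ(w^(i))` are strictly increasing and `w^(r) = w'`.  Taking `pJ = id`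
(and `J = ∅`) gives the weak left order `<_∅`. -/
noncomputable def ltJ {G : Type*} [Group G] (S : Set G) (ℓ : G → ℕ) (pJ : G → G)
    (w w' : G) : Prop :=
  ∃ r : ℕ, 1 ≤ r ∧ ∃ s : ℕ → G,
    (∀ m, 1 ≤ m → m ≤ r → s m ∈ S) ∧
    (∀ m, 1 ≤ m → m ≤ r → ℓ (chainElt pJ s w (m - 1)) < ℓ (chainElt pJ s w m)) ∧
    chainElt pJ s w r = w'

/-- `w` is the longest element of a subgroup `H` of `W` (with respect to `ℓ`). -/
noncomputable def IsLongestIn (R : RootSystemData V) (Δ : Set V)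
    (H : Subgroup (V ≃ₗ[ℝ] V)) (w : V ≃ₗ[ℝ] V) : Prop :=
  w ∈ H ∧ ∀ v ∈ H, len R Δ v ≤ len R Δ w

end PaperSp

namespace PaperSp

variable {V : Type} [AddCommGroup V] [Module ℝ V]

/-- `parts` is the decomposition of the set `Δ` of simple roots into the (mutually
orthogonal, connected) sets of simple roots of the irreducible factors of `Φ`. -/
structure IsFactorDecomp (R : RootSystemData V) (Δ : Set V) {ι : Type}
    (parts : ι → Set V) : Prop where
  union_eq : (⋃ c, parts c) = Δ
  disj : ∀ c c', c ≠ c' → Disjoint (parts c) (parts c')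
  nonempty : ∀ c, (parts c).Nonempty
  ortho : ∀ c c', c ≠ c' → ∀ a ∈ parts c, ∀ b ∈ parts c', R.pairing a b = 0
  irred : ∀ c, ∀ A B : Set V, A ∪ B = parts c → A.Nonempty → B.Nonempty →
    (∀ a ∈ A, ∀ b ∈ B, R.pairing a b = 0) → False

/-- The roots of the irreducible factor with simple roots `parts c`:  the roots that are
integral combinations of the simple roots in `parts c`. -/
noncomputable def PhiFactor (R : RootSystemData V) {ι : Type} (parts : ι → Set V)
    (c : ι) : Set V :=
  {β | β ∈ R.Phi ∧ ∃ q : V →₀ ℤ, (q.support : Set V) ⊆ parts c ∧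
    β = q.sum (fun a m => (m : ℝ) • a)}

/-- Standard basis vector of `ℝ^k`. -/
noncomputable def eVec {k : ℕ} (i : Fin k) : Fin k → ℝ := fun j => if j = i then 1 else 0

/-- The canonical pairing `⟨β, α∨⟩ = 2(α,β)/(α,α)` of the standard root systems in
Euclidean space. -/
noncomputable def pairStd {k : ℕ} (α β : Fin k → ℝ) : ℝ :=
  2 * (∑ i, α i * β i) / (∑ i, α i * α i)

/-- The root system of type `A_m`: `{e_i − e_j : i ≠ j} ⊆ ℝ^{m+1}`. -/
noncomputable def stdA (m : ℕ) : Set (Fin (m + 1) → ℝ) :=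
  {v | ∃ i j : Fin (m + 1), i ≠ j ∧ v = eVec i - eVec j}

/-- The root system of type `D_m`: `{±e_i ± e_j : i ≠ j} ⊆ ℝ^m`. -/
noncomputable def stdD (m : ℕ) : Set (Fin m → ℝ) :=
  {v | ∃ i j : Fin m, i ≠ j ∧
    (v = eVec i + eVec j ∨ v = eVec i - eVec j ∨
     v = -eVec i + eVec j ∨ v = -eVec i - eVec j)}

/-- The root system of type `B_m`: `{±e_i} ∪ {±e_i ± e_j : i ≠ j} ⊆ ℝ^m`. -/
noncomputable def stdB (m : ℕ) : Set (Fin m → ℝ) :=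
  stdD m ∪ {v | ∃ i : Fin m, v = eVec i ∨ v = -eVec i}

/-- The root system of type `C_m`: `{±2e_i} ∪ {±e_i ± e_j : i ≠ j} ⊆ ℝ^m`. -/
noncomputable def stdC (m : ℕ) : Set (Fin m → ℝ) :=
  stdD m ∪ {v | ∃ i : Fin m, v = (2 : ℝ) • eVec i ∨ v = -((2 : ℝ) • eVec i)}

/-- `Φc` is isomorphic, as a root system, to the standard root system `Ψ ⊆ ℝ^k`:
there is a bijection `Φc → Ψ` preserving the canonical pairings. -/
noncomputable def factorIso {k : ℕ} (R : RootSystemData V) (Φc : Set V)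
    (Ψ : Set (Fin k → ℝ)) : Prop :=
  ∃ φ : V → (Fin k → ℝ), Set.BijOn φ Φc Ψ ∧
    ∀ α ∈ Φc, ∀ β ∈ Φc, pairStd (φ α) (φ β) = R.pairing α β

/-- Every irreducible factor of `Φ` is of classical type `A`, `B`, `C` or `D`. -/
noncomputable def NoExceptionalFactor (R : RootSystemData V) {ι : Type}
    (parts : ι → Set V) : Prop :=
  ∀ c : ι,
    (∃ m : ℕ, factorIso R (PhiFactor R parts c) (stdA m)) ∨
    (∃ m : ℕ, factorIso R (PhiFactor R parts c) (stdB m)) ∨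
    (∃ m : ℕ, factorIso R (PhiFactor R parts c) (stdC m)) ∨
    (∃ m : ℕ, factorIso R (PhiFactor R parts c) (stdD m))

/-- `hr c` is the highest root of the irreducible factor `c` and `hco c` is the
(finitely supported) family of its coefficients over the simple roots `parts c`. -/
structure IsHighestRootData (R : RootSystemData V) (Pos : Set V) {ι : Type}
    (parts : ι → Set V) (hr : ι → V) (hco : ι → (V →₀ ℕ)) : Prop where
  mem_pos : ∀ c, hr c ∈ Pos
  mem_factor : ∀ c, hr c ∈ PhiFactor R parts c
  coeff_supp : ∀ c, (((hco c).support : Set V)) ⊆ parts c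
  coeff_eq : ∀ c, hr c = (hco c).sum (fun a m => (m : ℝ) • a)
  highest : ∀ c, ∀ β ∈ PhiFactor R parts c, ∃ q : V →₀ ℕ,
    (q.support : Set V) ⊆ parts c ∧ hr c - β = q.sum (fun a m => (m : ℝ) • a)

/-- The longest element of a subgroup `H` of the Weyl group (chosen by choice). -/
noncomputable def longestElt (R : RootSystemData V) (Δ : Set V)
    (H : Subgroup (V ≃ₗ[ℝ] V)) : V ≃ₗ[ℝ] V :=
  Classical.epsilon (fun w => IsLongestIn R Δ H w)

/-- The subset `W_Ω` of `W` attached to the irreducible factor `c`: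
`{1} ∪ {w_{Δ^(i)} w_Δc : the coefficient of α_i in the highest root of the factor is 1}`,
where `w_{Δ^(i)}` is the longest element of the subgroup generated by the simple
reflections of the factor other than `s_{α_i}`, and `w_{Δc}` is the longest element of
the Weyl group of the factor. -/
noncomputable def OmegaSet (R : RootSystemData V) (Δ : Set V) {ι : Type}
    (parts : ι → Set V) (hco : ι → (V →₀ ℕ)) (c : ι) : Set (V ≃ₗ[ℝ] V) :=
  {u | u = 1 ∨ ∃ a ∈ parts c, hco c a = 1 ∧
    u = longestElt R Δ (WsubJ R (parts c \ {a})) * longestElt R Δ (WsubJ R (parts c))}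

/-- The subgroup `W_Ω ⊆ W`: the product of the subgroups `W_Ω` of the irreducible
factors. -/
noncomputable def WOmega (R : RootSystemData V) (Δ : Set V) {ι : Type}
    (parts : ι → Set V) (hco : ι → (V →₀ ℕ)) : Subgroup (V ≃ₗ[ℝ] V) :=
  Subgroup.closure (⋃ c, OmegaSet R Δ parts hco c)

end PaperSp

namespace PaperSp

section Aux

variable {V : Type} [AddCommGroup V] [Module ℝ V] {R : RootSystemData V} {Pos Δ : Set V}

lemma inv_app (w : V ≃ₗ[ℝ] V) (x : V) : w⁻¹ (w x) = x := w.symm_apply_apply x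
lemma app_inv (w : V ≃ₗ[ℝ] V) (x : V) : w (w⁻¹ x) = x := w.apply_symm_apply x

lemma neg_mem_Phi {α : V} (h : α ∈ R.Phi) : -α ∈ R.Phi := by
  have := R.reflect_mem α h α h
  rw [R.pairing_self α h, two_smul] at this
  simpa using this

lemma refl_app {α : V} (h : α ∈ R.Phi) (x : V) : R.refl α x = x - R.pairing α x • α := by
  simp [RootSystemData.refl, h, Module.reflection_apply]

lemma refl_refl {α : V} (h : α ∈ R.Phi) (x : V) : R.refl α (R.refl α x) = x := by
  simp only [refl_app h, map_sub, map_smul, R.pairing_self α h, smul_eq_mul, sub_smul]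
  rw [mul_smul, two_smul, smul_add]; abel

lemma refl_self {α : V} (h : α ∈ R.Phi) : R.refl α α = -α := by
  rw [refl_app h, R.pairing_self α h, two_smul]; abel

lemma refl_mul_self {α : V} (h : α ∈ R.Phi) : R.refl α * R.refl α = 1 := by
  ext x; exact refl_refl h x

lemma refl_inv {α : V} (h : α ∈ R.Phi) : (R.refl α)⁻¹ = R.refl α :=
  inv_eq_of_mul_eq_one_left (refl_mul_self h)

lemma weyl_mem {w : V ≃ₗ[ℝ] V} (hw : w ∈ weylGroup R) : ∀ β ∈ R.Phi, w β ∈ R.Phi := by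
  induction hw using Subgroup.closure_induction'' with
  | mem x hx =>
    obtain ⟨α, hα, rfl⟩ := hx
    intro β hβ; rw [refl_app hα]; exact R.reflect_mem α hα β hβ
  | inv_mem x hx =>
    obtain ⟨α, hα, rfl⟩ := hx
    intro β hβ; rw [refl_inv hα, refl_app hα]; exact R.reflect_mem α hα β hβ
  | one => intro β hβ; exact hβ
  | mul x y _ _ hx hy => intro β hβ; exact hx _ (hy _ hβ)

/-- uniqueness of coroots -/
lemma pairing_unique {α : V} (h : α ∈ R.Phi) (f : V →ₗ[ℝ] ℝ) (h2 : f α = 2)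
    (hf : ∀ β ∈ R.Phi, β - f β • α ∈ R.Phi) : f = R.pairing α := by
  refine Module.Dual.eq_of_preReflection_mapsTo (R := ℝ) (x := α) R.finite R.span_top h2 ?_
    (R.pairing_self α h) ?_
  · intro β hβ; rw [Module.preReflection_apply]; exact hf β hβ
  · intro β hβ; rw [Module.preReflection_apply]; exact R.reflect_mem α h β hβ

lemma pairing_weyl {w : V ≃ₗ[ℝ] V} (hw : w ∈ weylGroup R) {α : V} (h : α ∈ R.Phi) (x : V) :
    R.pairing (w α) (w x) = R.pairing α x := by
  have : (R.pairing α).comp ((w⁻¹ : V ≃ₗ[ℝ] V) : V →ₗ[ℝ] V) = R.pairing (w α) := by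
    apply pairing_unique (weyl_mem hw _ h)
    · simp only [LinearMap.comp_apply, LinearEquiv.coe_coe, inv_app, R.pairing_self α h]
    · intro β hβ
      have h1 := weyl_mem (inv_mem hw) β hβ
      have h2 := weyl_mem hw _ (R.reflect_mem α h _ h1)
      simpa [app_inv] using h2
  rw [← this]
  simp only [LinearMap.comp_apply, LinearEquiv.coe_coe, inv_app]

lemma pairing_neg {α : V} (h : α ∈ R.Phi) (x : V) : R.pairing (-α) x = - R.pairing α x := by
  have : - R.pairing α = R.pairing (-α) := by
    apply pairing_unique (neg_mem_Phi h)
    · simp [R.pairing_self α h]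
    · intro β hβ
      simpa using R.reflect_mem α h β hβ
  rw [← this]; rfl

lemma refl_mem_weyl {α : V} (h : α ∈ R.Phi) : R.refl α ∈ weylGroup R :=
  Subgroup.subset_closure ⟨α, h, rfl⟩

lemma refl_conj {w : V ≃ₗ[ℝ] V} (hw : w ∈ weylGroup R) {α : V} (h : α ∈ R.Phi) :
    R.refl (w α) * w = w * R.refl α := by
  ext x
  change R.refl (w α) (w x) = w (R.refl α x)
  rw [refl_app h, refl_app (weyl_mem hw _ h), pairing_weyl hw h, map_sub, map_smul]

lemma refl_neg {α : V} (h : α ∈ R.Phi) : R.refl (-α) = R.refl α := by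
  ext x; rw [refl_app h, refl_app (neg_mem_Phi h), pairing_neg h]; simp

/-- invariant form -/
noncomputable def frm (R : RootSystemData V) (x y : V) : ℝ :=
  ∑ γ ∈ R.finite.toFinset, R.pairing γ x * R.pairing γ y

lemma frm_comm (x y : V) : frm R x y = frm R y x := by
  unfold frm; exact Finset.sum_congr rfl fun _ _ => mul_comm _ _

lemma frm_refl {α : V} (h : α ∈ R.Phi) (x y : V) :
    frm R (R.refl α x) (R.refl α y) = frm R x y := by
  unfold frm
  symm
  refine Finset.sum_bij' (fun γ _ => R.refl α γ) (fun γ _ => R.refl α γ) ?_ ?_ ?_ ?_ ?_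
  · intro γ hγ; simp only [Set.Finite.mem_toFinset] at *; exact weyl_mem (refl_mem_weyl h) _ hγ
  · intro γ hγ; simp only [Set.Finite.mem_toFinset] at *; exact weyl_mem (refl_mem_weyl h) _ hγ
  · intro γ _; exact refl_refl h γ
  · intro γ _; exact refl_refl h γ
  · intro γ hγ
    simp only [Set.Finite.mem_toFinset] at hγ
    rw [pairing_weyl (refl_mem_weyl h) hγ, pairing_weyl (refl_mem_weyl h) hγ]

lemma frm_eq {α : V} (h : α ∈ R.Phi) (y : V) :
    2 * frm R α y = R.pairing α y * frm R α α := by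
  have h1 := frm_refl h α y
  rw [refl_self h, refl_app h] at h1
  have h2 : frm R (-α) (y - R.pairing α y • α) = - frm R α y + R.pairing α y * frm R α α := by
    unfold frm
    rw [Finset.mul_sum, ← Finset.sum_neg_distrib, ← Finset.sum_add_distrib]
    refine Finset.sum_congr rfl fun γ _ => ?_
    simp only [map_neg, map_sub, map_smul, smul_eq_mul]; ring
  linarith

lemma frm_pos {α : V} (h : α ∈ R.Phi) : 0 < frm R α α := by
  unfold frm
  refine Finset.sum_pos' (fun γ _ => mul_self_nonneg _) ⟨α, by simpa using h, ?_⟩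
  rw [R.pairing_self α h]; norm_num

lemma pairing_pos_symm {α β : V} (hα : α ∈ R.Phi) (hβ : β ∈ R.Phi) (h : 0 < R.pairing α β) :
    0 < R.pairing β α := by
  have h1 := frm_eq hα β
  have h2 := frm_eq hβ α
  rw [frm_comm] at h2
  have h3 := frm_pos hα
  have h4 := frm_pos hβ
  have h5 : 0 < R.pairing β α * frm R β β := by rw [← h2, h1]; positivity
  exact pos_of_mul_pos_left h5 h4.le

lemma pairing_zero_symm {α β : V} (hα : α ∈ R.Phi) (hβ : β ∈ R.Phi) (h : R.pairing α β = 0) :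
    R.pairing β α = 0 := by
  have h1 := frm_eq hα β
  have h2 := frm_eq hβ α
  rw [frm_comm] at h2
  have h4 := frm_pos hβ
  rw [h] at h1
  have : R.pairing β α * frm R β β = 0 := by rw [← h2, h1]; simp
  rcases mul_eq_zero.1 this with h | h
  · exact h
  · exact absurd h h4.ne'

lemma IsBase.neg_pos (hB : IsBase R Pos Δ) {β : V} (h : β ∈ R.Phi) (hn : β ∉ Pos) : -β ∈ Pos :=
  (hB.mem_or_neg β h).resolve_left hn

lemma IsBase.not_pos_of_neg (hB : IsBase R Pos Δ) {β : V} (h : -β ∈ Pos) : β ∉ Pos :=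
  fun h' => hB.not_both β ⟨h', h⟩

lemma IsBase.neg_not_pos (hB : IsBase R Pos Δ) {β : V} (h : β ∈ Pos) : -β ∉ Pos :=
  fun h' => hB.not_both β ⟨h, h'⟩

lemma IsBase.dphi (hB : IsBase R Pos Δ) {a : V} (h : a ∈ Δ) : a ∈ R.Phi :=
  hB.pos_sub (hB.delta_sub h)

lemma IsBase.span_eq (hB : IsBase R Pos Δ) : Submodule.span ℝ Δ = ⊤ := by
  rw [eq_top_iff, ← R.span_top, Submodule.span_le]
  have key : ∀ β ∈ Pos, β ∈ Submodule.span ℝ Δ := by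
    intro β hβ
    obtain ⟨c, hc, rfl⟩ := hB.decomp β hβ
    exact Submodule.sum_mem _ fun a ha => Submodule.smul_mem _ _ (Submodule.subset_span (hc ha))
  intro β hβ
  rcases hB.mem_or_neg β hβ with h | h
  · exact key β h
  · simpa using Submodule.neg_mem _ (key _ h)

noncomputable def bas (hB : IsBase R Pos Δ) : Module.Basis Δ ℝ V :=
  Module.Basis.mk hB.indep (by simp [hB.span_eq])

/-- coordinate at a simple root, zero if `a ∉ Δ` -/
noncomputable def cf (hB : IsBase R Pos Δ) (a : V) : V →ₗ[ℝ] ℝ :=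
  if h : a ∈ Δ then (bas hB).coord ⟨a, h⟩ else 0

lemma cf_self (hB : IsBase R Pos Δ) {a : V} (h : a ∈ Δ) : cf hB a a = 1 := by
  have : (bas hB) ⟨a, h⟩ = a := by simp [bas]
  have h2 : (bas hB).coord ⟨a, h⟩ ((bas hB) ⟨a, h⟩) = 1 := by simp
  rw [this] at h2
  simpa [cf, h] using h2

lemma cf_ne (hB : IsBase R Pos Δ) {a b : V} (hb : b ∈ Δ) (hab : a ≠ b) : cf hB a b = 0 := by
  unfold cf
  split_ifs with h
  · have : (bas hB) ⟨b, hb⟩ = b := by simp [bas]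
    rw [← this, Module.Basis.coord_apply, Module.Basis.repr_self, Finsupp.single_apply, if_neg]
    intro h; exact hab (Subtype.ext_iff.1 h).symm
  · rfl

lemma cf_ext (hB : IsBase R Pos Δ) {x y : V} (h : ∀ a ∈ Δ, cf hB a x = cf hB a y) : x = y := by
  apply (bas hB).ext_elem
  rintro ⟨a, ha⟩
  simpa [cf, ha] using h a ha

noncomputable def dset (hB : IsBase R Pos Δ) : Finset V :=
  (R.finite.subset (hB.delta_sub.trans hB.pos_sub)).toFinset

lemma mem_dset (hB : IsBase R Pos Δ) {a : V} : a ∈ dset hB ↔ a ∈ Δ := by simp [dset]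

lemma cf_sum (hB : IsBase R Pos Δ) (x : V) : ∑ a ∈ dset hB, cf hB a x • a = x := by
  apply cf_ext hB
  intro a ha
  rw [map_sum, Finset.sum_eq_single a]
  · rw [map_smul, cf_self hB ha, smul_eq_mul, mul_one]
  · intro b hb hne
    rw [map_smul, cf_ne hB ((mem_dset hB).1 hb) hne.symm, smul_zero]
  · intro h; exact absurd ((mem_dset hB).2 ha) h

lemma lin_sum (hB : IsBase R Pos Δ) {M : Type*} [AddCommGroup M] [Module ℝ M] (f : V →ₗ[ℝ] M)
    (x : V) : f x = ∑ a ∈ dset hB, cf hB a x • f a := by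
  conv_lhs => rw [← cf_sum hB x]
  simp

lemma cf_fsum (hB : IsBase R Pos Δ) (c : V →₀ ℕ) (hc : (c.support : Set V) ⊆ Δ) {a : V} :
    cf hB a (c.sum (fun a m => (m : ℝ) • a)) = c a := by
  rw [Finsupp.sum, map_sum]
  by_cases ha : a ∈ c.support
  · rw [Finset.sum_eq_single a]
    · rw [map_smul, cf_self hB (hc ha), smul_eq_mul, mul_one]
    · intro b hb hne; rw [map_smul, cf_ne hB (hc hb) hne.symm, smul_zero]
    · intro h; exact absurd ha h
  · rw [Finset.sum_eq_zero]
    · simp at ha; simp [ha]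
    · intro b hb
      rw [map_smul, cf_ne hB (hc hb) (by rintro rfl; exact ha hb), smul_zero]

lemma cf_fsumZ (hB : IsBase R Pos Δ) (c : V →₀ ℤ) (hc : (c.support : Set V) ⊆ Δ) {a : V} :
    cf hB a (c.sum (fun a m => (m : ℝ) • a)) = c a := by
  rw [Finsupp.sum, map_sum]
  by_cases ha : a ∈ c.support
  · rw [Finset.sum_eq_single a]
    · rw [map_smul, cf_self hB (hc ha), smul_eq_mul, mul_one]
    · intro b hb hne; rw [map_smul, cf_ne hB (hc hb) hne.symm, smul_zero]
    · intro h; exact absurd ha h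
  · rw [Finset.sum_eq_zero]
    · simp at ha; simp [ha]
    · intro b hb
      rw [map_smul, cf_ne hB (hc hb) (by rintro rfl; exact ha hb), smul_zero]

lemma pos_nat (hB : IsBase R Pos Δ) {β : V} (h : β ∈ Pos) (a : V) : ∃ n : ℕ, cf hB a β = n := by
  obtain ⟨c, hc, rfl⟩ := hB.decomp β h
  exact ⟨c a, cf_fsum hB c hc⟩

lemma pos_nonneg (hB : IsBase R Pos Δ) {β : V} (h : β ∈ Pos) (a : V) : 0 ≤ cf hB a β := by
  obtain ⟨n, hn⟩ := pos_nat hB h a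
  rw [hn]; positivity

lemma nonpos_of_not (hB : IsBase R Pos Δ) {β : V} (h : β ∈ R.Phi) (hn : β ∉ Pos) (a : V) :
    cf hB a β ≤ 0 := by
  have := pos_nonneg hB (hB.neg_pos h hn) a
  rw [map_neg] at this; linarith

lemma root_int (hB : IsBase R Pos Δ) {β : V} (h : β ∈ R.Phi) (a : V) :
    ∃ n : ℤ, cf hB a β = n := by
  rcases hB.mem_or_neg β h with h | h
  · obtain ⟨n, hn⟩ := pos_nat hB h a
    exact ⟨n, by simpa using hn⟩
  · obtain ⟨n, hn⟩ := pos_nat hB h a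
    refine ⟨-n, ?_⟩
    rw [map_neg] at hn; push_cast; linarith

lemma mem_pos_of (hB : IsBase R Pos Δ) {β : V} (h : β ∈ R.Phi) {a : V} (ha : 0 < cf hB a β) :
    β ∈ Pos := by
  by_contra hn
  exact absurd (nonpos_of_not hB h hn a) (not_le.2 ha)

lemma not_pos_of (hB : IsBase R Pos Δ) {β : V} {a : V} (ha : cf hB a β < 0) :
    β ∉ Pos := fun h => absurd (pos_nonneg hB h a) (not_le.2 ha)

lemma root_ne_zero {β : V} (h : β ∈ R.Phi) : β ≠ 0 := fun h' => R.zero_not_mem (h' ▸ h)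

lemma exists_cf_pos (hB : IsBase R Pos Δ) {β : V} (h : β ∈ Pos) : ∃ a ∈ Δ, 0 < cf hB a β := by
  by_contra! hc
  apply root_ne_zero (hB.pos_sub h)
  apply cf_ext hB
  intro a ha
  rw [map_zero]
  exact le_antisymm (hc a ha) (pos_nonneg hB h a)

lemma mem_pos_of_nonneg (hB : IsBase R Pos Δ) {β : V} (h : β ∈ R.Phi)
    (ha : ∀ a ∈ Δ, 0 ≤ cf hB a β) : β ∈ Pos := by
  by_contra hn
  obtain ⟨a, h1, h2⟩ := exists_cf_pos hB (hB.neg_pos h hn)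
  rw [map_neg] at h2
  linarith [ha a h1]

lemma simple_pos (hB : IsBase R Pos Δ) {a β : V} (ha : a ∈ Δ) (h : β ∈ Pos) (hne : β ≠ a) :
    R.refl a β ∈ Pos := by
  have hex : ∃ b ∈ Δ, b ≠ a ∧ 0 < cf hB b β := by
    by_contra! hc
    have : β = cf hB a β • a := by
      apply cf_ext hB
      intro b hb
      rw [map_smul, smul_eq_mul]
      by_cases hba : b = a
      · subst hba; rw [cf_self hB hb, mul_one]
      · rw [cf_ne hB ha hba, mul_zero]
        exact le_antisymm (hc b hb hba) (pos_nonneg hB h b)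
    have hp := pos_nonneg hB h a
    rcases R.reduced a (hB.dphi ha) (cf hB a β) (this ▸ hB.pos_sub h) with h1 | h1
    · rw [h1, one_smul] at this; exact hne this
    · linarith
  obtain ⟨b, hb, hba, hp⟩ := hex
  apply mem_pos_of hB (weyl_mem (refl_mem_weyl (hB.dphi ha)) _ (hB.pos_sub h)) (a := b)
  rw [refl_app (hB.dphi ha), map_sub, map_smul, cf_ne hB ha hba]
  simpa using hp

end Aux

section Aux2

variable {V : Type} [AddCommGroup V] [Module ℝ V] {R : RootSystemData V} {Pos Δ : Set V}

lemma WsubJ_le_weyl (hB : IsBase R Pos Δ) {K : Set V} (hK : K ⊆ Δ) : WsubJ R K ≤ weylGroup R := by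
  apply Subgroup.closure_mono
  rintro _ ⟨a, ha, rfl⟩
  exact ⟨a, hB.dphi (hK ha), rfl⟩

lemma WsubJ_mono {K L : Set V} (h : K ⊆ L) : WsubJ R K ≤ WsubJ R L := by
  apply Subgroup.closure_mono
  rintro _ ⟨a, ha, rfl⟩
  exact ⟨a, h ha, rfl⟩

lemma refl_mem_WsubJ {K : Set V} {a : V} (h : a ∈ K) : R.refl a ∈ WsubJ R K :=
  Subgroup.subset_closure ⟨a, h, rfl⟩

lemma pos_conj_aux (hB : IsBase R Pos Δ) : ∀ (n : ℕ) (β : V), β ∈ Pos →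
    ∑ a ∈ dset hB, cf hB a β < n → ∃ w ∈ WsubJ R Δ, ∃ a ∈ Δ, β = w a := by
  intro n
  induction n with
  | zero =>
    intro β hβ h
    have : 0 ≤ ∑ a ∈ dset hB, cf hB a β := Finset.sum_nonneg fun a _ => pos_nonneg hB hβ a
    push_cast at h; linarith
  | succ n ih =>
    intro β hβ h
    by_cases hd : β ∈ Δ
    · exact ⟨1, one_mem _, β, hd, rfl⟩
    have hphi := hB.pos_sub hβ
    have h2 : (0:ℝ) < ∑ a ∈ dset hB, cf hB a β • R.pairing β a := by
      rw [← lin_sum hB, R.pairing_self β hphi]; norm_num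
    obtain ⟨a, ha, hpa⟩ : ∃ a ∈ dset hB, 0 < cf hB a β • R.pairing β a := by
      by_contra! hc
      exact absurd (Finset.sum_nonpos hc) (not_le.2 h2)
    have haΔ := (mem_dset hB).1 ha
    have hp1 : 0 < R.pairing β a := pos_of_mul_pos_right hpa (pos_nonneg hB hβ a)
    have hp2 := pairing_pos_symm hphi (hB.dphi haΔ) hp1
    have hne : β ≠ a := fun h => hd (h ▸ haΔ)
    have hs := simple_pos hB haΔ hβ hne
    obtain ⟨k, hk⟩ := R.crystallographic a (hB.dphi haΔ) β hphi
    have hk1 : (1:ℝ) ≤ R.pairing a β := by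
      rw [hk] at hp2 ⊢; exact_mod_cast hp2
    have hsum : ∑ b ∈ dset hB, cf hB b (R.refl a β) =
        ∑ b ∈ dset hB, cf hB b β - R.pairing a β := by
      rw [refl_app (hB.dphi haΔ)]
      simp only [map_sub, map_smul, Finset.sum_sub_distrib]
      rw [Finset.sum_eq_single a (f := fun b => R.pairing a β • cf hB b a), cf_self hB haΔ]
      · simp
      · intro b _ hb; rw [cf_ne hB haΔ hb, smul_zero]
      · intro h; exact absurd ha h
    obtain ⟨w, hw, b, hb, hwb⟩ := ih _ hs (by rw [hsum]; push_cast at h; linarith)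
    refine ⟨R.refl a * w, mul_mem (refl_mem_WsubJ haΔ) hw, b, hb, ?_⟩
    change β = R.refl a (w b)
    rw [← hwb, refl_refl (hB.dphi haΔ)]

lemma pos_conj (hB : IsBase R Pos Δ) {β : V} (h : β ∈ Pos) :
    ∃ w ∈ WsubJ R Δ, ∃ a ∈ Δ, β = w a := by
  obtain ⟨n, hn⟩ := exists_nat_gt (∑ a ∈ dset hB, cf hB a β)
  exact pos_conj_aux hB n β h hn

lemma weyl_eq (hB : IsBase R Pos Δ) : weylGroup R = WsubJ R Δ := by
  apply le_antisymm _ (WsubJ_le_weyl hB le_rfl)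
  unfold weylGroup
  rw [Subgroup.closure_le]
  have key : ∀ β ∈ Pos, R.refl β ∈ WsubJ R Δ := by
    intro β hβ
    obtain ⟨w, hw, a, ha, rfl⟩ := pos_conj hB hβ
    have h1 := refl_conj (WsubJ_le_weyl hB le_rfl hw) (hB.dphi ha)
    rw [← eq_mul_inv_iff_mul_eq] at h1
    rw [h1]
    exact mul_mem (mul_mem hw (refl_mem_WsubJ ha)) (inv_mem hw)
  rintro _ ⟨β, hβ, rfl⟩
  rcases hB.mem_or_neg β hβ with h | h
  · exact key β h
  · rw [← refl_neg hβ]; exact key _ h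

/-- exchange -/
lemma exchange (hB : IsBase R Pos Δ) : ∀ (l : List (V ≃ₗ[ℝ] V)), (∀ x ∈ l, x ∈ refls R Δ) →
    ∀ β ∈ Pos, (l.prod)⁻¹ β ∉ Pos → ∃ l' : List (V ≃ₗ[ℝ] V), l'.length + 1 = l.length ∧
      (∀ x ∈ l', x ∈ refls R Δ) ∧ R.refl β * l.prod = l'.prod := by
  intro l
  induction l with
  | nil => intro _ β hβ h; exact absurd (by simpa using hβ) h
  | cons s t ih =>
    intro hl β hβ h
    obtain ⟨b, hb, rfl⟩ := hl s (by simp)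
    have hbp := hB.dphi hb
    have ht : ∀ x ∈ t, x ∈ refls R Δ := fun x hx => hl x (by simp [hx])
    by_cases hbb : β = b
    · subst hbb
      refine ⟨t, by simp, ht, ?_⟩
      rw [List.prod_cons, ← mul_assoc, refl_mul_self hbp, one_mul]
    · have h1 := simple_pos hB hb hβ hbb
      have h2 : (t.prod)⁻¹ (R.refl b β) ∉ Pos := by
        rw [List.prod_cons, mul_inv_rev, refl_inv hbp] at h
        exact h
      obtain ⟨t', h3, h4, h5⟩ := ih ht _ h1 h2
      refine ⟨R.refl b :: t', by simp [h3], ?_, ?_⟩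
      · intro x hx
        rcases List.mem_cons.1 hx with rfl | hx
        · exact ⟨b, hb, rfl⟩
        · exact h4 x hx
      · rw [List.prod_cons, List.prod_cons, ← h5, ← mul_assoc, ← mul_assoc]
        congr 1
        have h6 := refl_conj (refl_mem_weyl hbp) (hB.pos_sub h1)
        rw [refl_refl hbp] at h6
        exact h6

/-- inversions -/
def invs (Pos : Set V) (w : V ≃ₗ[ℝ] V) : Set V := {γ | γ ∈ Pos ∧ w γ ∉ Pos}

lemma invs_finite (hB : IsBase R Pos Δ) (w : V ≃ₗ[ℝ] V) : (invs Pos w).Finite :=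
  (R.finite.subset hB.pos_sub).subset fun _ h => h.1

lemma invs_up (hB : IsBase R Pos Δ) {w : V ≃ₗ[ℝ] V} (hw : w ∈ weylGroup R) {a : V} (ha : a ∈ Δ)
    (h : w⁻¹ a ∈ Pos) : invs Pos (R.refl a * w) = insert (w⁻¹ a) (invs Pos w) := by
  ext γ
  simp only [invs, Set.mem_ofPred_eq, Set.mem_insert_iff, LinearEquiv.mul_apply]
  have hap := hB.dphi ha
  constructor
  · rintro ⟨h1, h2⟩
    by_cases h3 : w γ ∈ Pos
    · left
      by_contra hne
      apply h2
      apply simple_pos hB ha h3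
      rintro rfl
      exact hne (inv_app w γ).symm
    · exact Or.inr ⟨h1, h3⟩
  · rintro (rfl | ⟨h1, h2⟩)
    · refine ⟨h, ?_⟩
      rw [app_inv, refl_self hap]
      exact hB.neg_not_pos (hB.delta_sub ha)
    · refine ⟨h1, fun h3 => ?_⟩
      by_cases h4 : R.refl a (w γ) = a
      · have h5 : w γ = -a := by rw [← refl_refl hap (w γ), h4, refl_self hap]
        have h6 : γ = - (w⁻¹ a) := by rw [← inv_app w γ, h5, map_neg]
        rw [h6] at h1
        exact hB.neg_not_pos h h1
      · have := simple_pos hB ha h3 h4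
        rw [refl_refl hap] at this
        exact h2 this

lemma ninv_up (hB : IsBase R Pos Δ) {w : V ≃ₗ[ℝ] V} (hw : w ∈ weylGroup R) {a : V} (ha : a ∈ Δ)
    (h : w⁻¹ a ∈ Pos) : (invs Pos (R.refl a * w)).ncard = (invs Pos w).ncard + 1 := by
  rw [invs_up hB hw ha h, Set.ncard_insert_of_notMem _ (invs_finite hB w)]
  rintro ⟨_, h2⟩
  rw [app_inv] at h2
  exact h2 (hB.delta_sub ha)

lemma ninv_down (hB : IsBase R Pos Δ) {w : V ≃ₗ[ℝ] V} (hw : w ∈ weylGroup R) {a : V} (ha : a ∈ Δ)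
    (h : w⁻¹ a ∉ Pos) : (invs Pos w).ncard = (invs Pos (R.refl a * w)).ncard + 1 := by
  have hap := hB.dphi ha
  have h1 := ninv_up hB (mul_mem (refl_mem_weyl hap) hw) ha (by
    rw [mul_inv_rev, refl_inv hap]
    change w⁻¹ (R.refl a a) ∈ Pos
    rw [refl_self hap, map_neg]
    exact hB.neg_pos (weyl_mem (inv_mem hw) _ hap) h)
  rwa [← mul_assoc, refl_mul_self hap, one_mul] at h1

lemma refls_inv (hB : IsBase R Pos Δ) {x : V ≃ₗ[ℝ] V} (hx : x ∈ refls R Δ) : x⁻¹ = x := by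
  obtain ⟨a, ha, rfl⟩ := hx; exact refl_inv (hB.dphi ha)

lemma refls_weyl (hB : IsBase R Pos Δ) {x : V ≃ₗ[ℝ] V} (hx : x ∈ refls R Δ) :
    x ∈ weylGroup R := by
  obtain ⟨a, ha, rfl⟩ := hx; exact refl_mem_weyl (hB.dphi ha)

lemma list_weyl (hB : IsBase R Pos Δ) {l : List (V ≃ₗ[ℝ] V)} (hl : ∀ x ∈ l, x ∈ refls R Δ) :
    l.prod ∈ weylGroup R := Subgroup.list_prod_mem _ fun x hx => refls_weyl hB (hl x hx)

lemma ninv_le_list (hB : IsBase R Pos Δ) : ∀ (l : List (V ≃ₗ[ℝ] V)), (∀ x ∈ l, x ∈ refls R Δ) →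
    (invs Pos l.prod).ncard ≤ l.length := by
  intro l
  induction l with
  | nil =>
    intro _
    have : invs Pos (1 : V ≃ₗ[ℝ] V) = ∅ := by
      ext γ; simp [invs]
    simp [this]
  | cons s t ih =>
    intro hl
    have ht : ∀ x ∈ t, x ∈ refls R Δ := fun x hx => hl x (by simp [hx])
    obtain ⟨b, hb, rfl⟩ := hl s (by simp)
    have := ih ht
    rw [List.prod_cons, List.length_cons]
    by_cases h : (t.prod)⁻¹ b ∈ Pos
    · have h1 := ninv_up hB (list_weyl hB ht) hb h
      omega
    · have h1 := ninv_down hB (list_weyl hB ht) hb h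
      omega

lemma exists_word (hB : IsBase R Pos Δ) {w : V ≃ₗ[ℝ] V} (hw : w ∈ weylGroup R) :
    ∃ l : List (V ≃ₗ[ℝ] V), l.length = (invs Pos w).ncard ∧ (∀ x ∈ l, x ∈ refls R Δ) ∧
      l.prod = w := by
  rw [weyl_eq hB] at hw
  have key : ∀ x ∈ refls R Δ, ∀ y : V ≃ₗ[ℝ] V, y ∈ weylGroup R →
      (∃ l : List (V ≃ₗ[ℝ] V), l.length = (invs Pos y).ncard ∧ (∀ x ∈ l, x ∈ refls R Δ) ∧
      l.prod = y) → ∃ l : List (V ≃ₗ[ℝ] V), l.length = (invs Pos (x * y)).ncard ∧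
        (∀ x ∈ l, x ∈ refls R Δ) ∧ l.prod = x * y := by
    rintro _ ⟨a, ha, rfl⟩ y hy ⟨l, h1, h2, rfl⟩
    by_cases h : (l.prod)⁻¹ a ∈ Pos
    · refine ⟨R.refl a :: l, ?_, ?_, by simp⟩
      · rw [ninv_up hB hy ha h, ← h1]; simp
      · intro x hx
        rcases List.mem_cons.1 hx with rfl | hx
        · exact ⟨a, ha, rfl⟩
        · exact h2 x hx
    · obtain ⟨l', h3, h4, h5⟩ := exchange hB l h2 a (hB.delta_sub ha) h
      refine ⟨l', ?_, h4, h5.symm⟩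
      have := ninv_down hB hy ha h
      omega
  have h0 : invs Pos (1 : V ≃ₗ[ℝ] V) = ∅ := by ext γ; simp [invs]
  induction hw using Subgroup.closure_induction_left with
  | one => exact ⟨[], by simp [h0], by simp, by simp⟩
  | mul_left x hx y hy ih => exact key x hx y (by rw [weyl_eq hB]; exact hy) ih
  | inv_mul_cancel x hx y hy ih =>
    rw [refls_inv hB hx]; exact key x hx y (by rw [weyl_eq hB]; exact hy) ih

lemma len_eq (hB : IsBase R Pos Δ) {w : V ≃ₗ[ℝ] V} (hw : w ∈ weylGroup R) :
    len R Δ w = (invs Pos w).ncard := by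
  unfold len lengthWrt
  obtain ⟨l, h1, h2, h3⟩ := exists_word hB hw
  apply le_antisymm
  · exact Nat.sInf_le ⟨l, h1, h2, h3⟩
  · refine le_csInf (Set.nonempty_of_mem (x := l.length) ⟨l, rfl, h2, h3⟩) ?_
    rintro n ⟨l', rfl, h5, rfl⟩
    exact ninv_le_list hB l' h5

lemma eq_one_of (hB : IsBase R Pos Δ) {w : V ≃ₗ[ℝ] V} (hw : w ∈ weylGroup R)
    (h : ∀ γ ∈ Pos, w γ ∈ Pos) : w = 1 := by
  obtain ⟨l, h1, _, h3⟩ := exists_word hB hw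
  have : invs Pos w = ∅ := by
    ext γ; simp only [invs, Set.mem_ofPred_eq, Set.mem_empty_iff_false, iff_false]
    rintro ⟨h4, h5⟩; exact h5 (h γ h4)
  rw [this, Set.ncard_empty, List.length_eq_zero_iff] at h1
  rw [← h3, h1, List.prod_nil]

lemma ninv_inv (hB : IsBase R Pos Δ) {w : V ≃ₗ[ℝ] V} (hw : w ∈ weylGroup R) :
    (invs Pos w⁻¹).ncard = (invs Pos w).ncard := by
  have : invs Pos w⁻¹ = (fun x => - w x) '' invs Pos w := by
    ext γ
    simp only [invs, Set.mem_ofPred_eq, Set.mem_image]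
    constructor
    · rintro ⟨h1, h2⟩
      refine ⟨-(w⁻¹ γ), ⟨hB.neg_pos (weyl_mem (inv_mem hw) _ (hB.pos_sub h1)) h2, ?_⟩, ?_⟩
      · rw [map_neg, app_inv]; exact hB.neg_not_pos h1
      · rw [map_neg, app_inv, neg_neg]
    · rintro ⟨x, ⟨h1, h2⟩, rfl⟩
      refine ⟨hB.neg_pos (weyl_mem hw _ (hB.pos_sub h1)) h2, ?_⟩
      rw [map_neg, inv_app]; exact hB.neg_not_pos h1
  rw [this]
  apply Set.ncard_image_of_injective
  intro x y h
  exact w.injective (neg_injective h)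

lemma ninv_right (hB : IsBase R Pos Δ) {w : V ≃ₗ[ℝ] V} (hw : w ∈ weylGroup R) {a : V} (ha : a ∈ Δ)
    (h : w a ∈ Pos) : (invs Pos (w * R.refl a)).ncard = (invs Pos w).ncard + 1 := by
  have hap := hB.dphi ha
  have h1 := ninv_up hB (inv_mem hw) ha (by rwa [inv_inv])
  rw [ninv_inv hB hw, ← ninv_inv hB (mul_mem (refl_mem_weyl hap) (inv_mem hw)), mul_inv_rev,
    inv_inv, refl_inv hap] at h1
  exact h1

/-- longest elements -/
lemma longest_neg (hB : IsBase R Pos Δ) {K : Set V} (hK : K ⊆ Δ) {v : V ≃ₗ[ℝ] V}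
    (hv : IsLongestIn R Δ (WsubJ R K) v) {a : V} (ha : a ∈ K) : v a ∉ Pos := by
  intro h
  have hvW := WsubJ_le_weyl hB hK hv.1
  have h1 := ninv_right hB hvW (hK ha) h
  have h2 := hv.2 _ (mul_mem hv.1 (refl_mem_WsubJ ha))
  rw [len_eq hB hvW, len_eq hB (mul_mem hvW (refl_mem_weyl (hB.dphi (hK ha))))] at h2
  omega

lemma longest_inv (hB : IsBase R Pos Δ) {K : Set V} (hK : K ⊆ Δ) {v : V ≃ₗ[ℝ] V}
    (hv : IsLongestIn R Δ (WsubJ R K) v) : IsLongestIn R Δ (WsubJ R K) v⁻¹ := by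
  have hvW := WsubJ_le_weyl hB hK hv.1
  refine ⟨inv_mem hv.1, fun x hx => ?_⟩
  rw [len_eq hB (inv_mem hvW), ninv_inv hB hvW, ← len_eq hB hvW]
  exact hv.2 x hx

lemma weyl_finite : (weylGroup R : Set (V ≃ₗ[ℝ] V)).Finite := by
  have hfin : Finite R.Phi := R.finite
  have h1 : (Set.pi Set.univ (fun _ : R.Phi => R.Phi)).Finite := Set.Finite.pi fun _ => R.finite
  refine Set.Finite.of_finite_image (f := fun (w : V ≃ₗ[ℝ] V) (x : R.Phi) => w x)
    (h1.subset ?_) ?_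
  · rintro _ ⟨w, hw, rfl⟩ x _
    exact weyl_mem hw _ x.2
  · intro w _ w' _ h
    apply LinearEquiv.toLinearMap_injective
    apply LinearMap.ext_on R.span_top
    intro x hx
    exact congrFun h ⟨x, hx⟩

lemma longest_spec (hB : IsBase R Pos Δ) {K : Set V} (hK : K ⊆ Δ) :
    IsLongestIn R Δ (WsubJ R K) (longestElt R Δ (WsubJ R K)) := by
  unfold longestElt
  apply Classical.epsilon_spec (p := fun w => IsLongestIn R Δ (WsubJ R K) w)
  have hf : (WsubJ R K : Set (V ≃ₗ[ℝ] V)).Finite := weyl_finite.subset (WsubJ_le_weyl hB hK)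
  obtain ⟨w, hw, h⟩ := Set.exists_max_image _ (len R Δ) hf ⟨1, one_mem _⟩
  exact ⟨w, hw, h⟩

/-- elements of `W_K` fix the coordinates outside `K` -/
lemma cf_WsubJ (hB : IsBase R Pos Δ) {K : Set V} (hK : K ⊆ Δ) {v : V ≃ₗ[ℝ] V}
    (hv : v ∈ WsubJ R K) {b : V} (hb : b ∉ K) : ∀ x, cf hB b (v x) = cf hB b x := by
  have key : ∀ a ∈ K, ∀ x, cf hB b (R.refl a x) = cf hB b x := by
    intro a ha x
    rw [refl_app (hB.dphi (hK ha)), map_sub, map_smul,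
      cf_ne hB (hK ha) (by rintro rfl; exact hb ha)]
    simp
  induction hv using Subgroup.closure_induction'' with
  | mem x hx => obtain ⟨a, ha, rfl⟩ := hx; exact key a ha
  | inv_mem x hx =>
    obtain ⟨a, ha, rfl⟩ := hx; rw [refl_inv (hB.dphi (hK ha))]; exact key a ha
  | one => intro x; rfl
  | mul x y _ _ hx hy => intro z; exact (hx (y z)).trans (hy z)

/-- an element sending `K` to nonpositive sends the nonnegative span of `K` to nonpositive -/
lemma cf_nonpos (hB : IsBase R Pos Δ) {K : Set V} (hK : K ⊆ Δ) {v : V ≃ₗ[ℝ] V}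
    (hv : IsLongestIn R Δ (WsubJ R K) v) {x : V} (hx : ∀ a ∈ Δ, 0 ≤ cf hB a x)
    (hx0 : ∀ a ∈ Δ, a ∉ K → cf hB a x = 0) (b : V) : cf hB b (v x) ≤ 0 := by
  have := lin_sum hB ((cf hB b).comp (v : V →ₗ[ℝ] V)) x
  simp only [LinearMap.comp_apply, LinearEquiv.coe_coe] at this
  rw [this]
  apply Finset.sum_nonpos
  intro a ha
  rw [mem_dset] at ha
  by_cases hak : a ∈ K
  · apply mul_nonpos_of_nonneg_of_nonpos (hx a ha)
    exact nonpos_of_not hB (weyl_mem (WsubJ_le_weyl hB hK hv.1) _ (hB.dphi ha))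
      (longest_neg hB hK hv hak) b
  · rw [hx0 a ha hak]; simp

lemma longest_in (hB : IsBase R Pos Δ) {K : Set V} (hK : K ⊆ Δ) {v : V ≃ₗ[ℝ] V}
    (hv : IsLongestIn R Δ (WsubJ R K) v) {x : V} (hx : x ∈ Pos)
    (hx0 : ∀ a ∈ Δ, a ∉ K → cf hB a x = 0) : v x ∉ Pos := by
  intro h
  obtain ⟨b, _, hb⟩ := exists_cf_pos hB h
  linarith [cf_nonpos hB hK hv (fun a _ => pos_nonneg hB hx a) hx0 b]

lemma WsubJ_out (hB : IsBase R Pos Δ) {K : Set V} (hK : K ⊆ Δ) {v : V ≃ₗ[ℝ] V}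
    (hv : v ∈ WsubJ R K) {x : V} (hx : x ∈ R.Phi) {b : V} (hbK : b ∉ K)
    (hb : cf hB b x ≠ 0) : v x ∈ Pos ↔ x ∈ Pos := by
  have h1 := cf_WsubJ hB hK hv hbK x
  have h2 := weyl_mem (WsubJ_le_weyl hB hK hv) _ hx
  rcases lt_or_gt_of_ne hb with h | h
  · exact ⟨fun h' => absurd h' (not_pos_of hB (h1 ▸ h)), fun h' => absurd h' (not_pos_of hB h)⟩
  · exact ⟨fun _ => mem_pos_of hB hx h, fun _ => mem_pos_of hB h2 (h1 ▸ h)⟩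

end Aux2

section Aux3

variable {V : Type} [AddCommGroup V] [Module ℝ V] {R : RootSystemData V} {Pos Δ : Set V}

/-- a positive root with support in `J` is sent to a positive root by elements of `W^J` -/
lemma WupJ_pos (hB : IsBase R Pos Δ) {J : Set V} {x : V ≃ₗ[ℝ] V}
    (hx : x ∈ WupJ R Pos J) {δ : V} (hδ : δ ∈ Pos) (h0 : ∀ a ∈ Δ, a ∉ J → cf hB a δ = 0) :
    x δ ∈ Pos := by
  apply mem_pos_of_nonneg hB (weyl_mem hx.1 _ (hB.pos_sub hδ))
  intro b _
  have := lin_sum hB ((cf hB b).comp (x : V →ₗ[ℝ] V)) δ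
  simp only [LinearMap.comp_apply, LinearEquiv.coe_coe] at this
  rw [this]
  apply Finset.sum_nonneg
  intro a ha
  rw [mem_dset] at ha
  by_cases hak : a ∈ J
  · exact mul_nonneg (pos_nonneg hB hδ a) (pos_nonneg hB (hx.2 a hak) b)
  · rw [h0 a ha hak]; simp

lemma WupJ_unique (hB : IsBase R Pos Δ) {J : Set V} (hJ : J ⊆ Δ) {x y : V ≃ₗ[ℝ] V}
    (hx : x ∈ WupJ R Pos J) (hy : y ∈ WupJ R Pos J) (hxy : x⁻¹ * y ∈ WsubJ R J) : x = y := by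
  suffices h : x⁻¹ * y = 1 by
    rw [inv_mul_eq_one] at h; exact h
  have hW := WsubJ_le_weyl hB hJ hxy
  apply eq_one_of hB hW
  intro γ hγ
  by_cases h : ∃ b ∈ Δ, b ∉ J ∧ cf hB b γ ≠ 0
  · obtain ⟨b, _, hbJ, hb⟩ := h
    exact (WsubJ_out hB hJ hxy (hB.pos_sub hγ) hbJ hb).2 hγ
  · push Not at h
    by_contra hn
    have h1 := hB.neg_pos (weyl_mem hW _ (hB.pos_sub hγ)) hn
    have h2 : x (-((x⁻¹ * y) γ)) ∈ Pos := by
      apply WupJ_pos hB hx h1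
      intro a ha haJ
      rw [map_neg, cf_WsubJ hB hJ hxy haJ, h a ha haJ, neg_zero]
    have h3 : x (-((x⁻¹ * y) γ)) = - y γ := by
      rw [map_neg]; congr 1; exact app_inv x (y γ)
    rw [h3] at h2
    exact hB.not_pos_of_neg h2 (WupJ_pos hB hy hγ h)

lemma proj_eq (hB : IsBase R Pos Δ) {J : Set V} (hJ : J ⊆ Δ) {pJ : (V ≃ₗ[ℝ] V) → (V ≃ₗ[ℝ] V)}
    (hpJ : IsProjJ R Pos J pJ) {w x : V ≃ₗ[ℝ] V} (hw : w ∈ weylGroup R) (hx : x ∈ WupJ R Pos J)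
    (h : x⁻¹ * w ∈ WsubJ R J) : pJ w = x := by
  apply WupJ_unique hB hJ (hpJ w hw).1 hx
  have := mul_mem (hpJ w hw).2 (inv_mem h)
  simpa [mul_assoc] using this

lemma step_proj (hB : IsBase R Pos Δ) {J : Set V} (hJ : J ⊆ Δ)
    {pJ : (V ≃ₗ[ℝ] V) → (V ≃ₗ[ℝ] V)}
    (hpJ : IsProjJ R Pos J pJ) {w : V ≃ₗ[ℝ] V} (hw : w ∈ weylGroup R) {a : V} (ha : a ∈ Δ)
    (h : w⁻¹ a ∈ Pos) :
    pJ (R.refl a * w) = pJ w ∨ len R Δ (pJ w) < len R Δ (pJ (R.refl a * w)) := by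
  have hap := hB.dphi ha
  have hsw := mul_mem (refl_mem_weyl hap) hw
  obtain ⟨hx, hv⟩ := hpJ w hw
  set x := pJ w with hxdef
  have hxa := weyl_mem (inv_mem hx.1) _ hap
  by_cases hc : ∃ b ∈ Δ, b ∉ J ∧ cf hB b (x⁻¹ a) ≠ 0
  · right
    obtain ⟨b, hb, hbJ, hb0⟩ := hc
    have h1 : x⁻¹ a ∈ Pos := by
      rw [← WsubJ_out hB hJ (inv_mem hv) hxa hbJ hb0]
      have : (x⁻¹ * w)⁻¹ (x⁻¹ a) = w⁻¹ a := by
        rw [mul_inv_rev, inv_inv]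
        change w⁻¹ (x (x⁻¹ a)) = _
        rw [app_inv]
      rwa [this]
    have h2 : R.refl a * x ∈ WupJ R Pos J := by
      refine ⟨mul_mem (refl_mem_weyl hap) hx.1, fun d hd => ?_⟩
      apply simple_pos hB ha (hx.2 d hd)
      intro h3
      rw [← h3, inv_app] at hb0
      exact hb0 (cf_ne hB (hJ hd) (by rintro rfl; exact hbJ hd))
    have h3 : pJ (R.refl a * w) = R.refl a * x := by
      apply proj_eq hB hJ hpJ hsw h2
      rw [mul_inv_rev, mul_assoc, inv_mul_cancel_left]
      exact hv
    rw [h3, len_eq hB hx.1, len_eq hB h2.1, ninv_up hB hx.1 ha h1]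
    omega
  · left
    push Not at hc
    have hpos : x⁻¹ a ∈ Pos := by
      by_contra hn
      have h1 := WupJ_pos hB hx (hB.neg_pos hxa hn) (by
        intro b hb hbJ; rw [map_neg, hc b hb hbJ, neg_zero])
      rw [map_neg, app_inv] at h1
      exact hB.neg_not_pos (hB.delta_sub ha) h1
    obtain ⟨b, hb, hb0⟩ := exists_cf_pos hB hpos
    have hbJ : b ∈ J := by
      by_contra hbJ; rw [hc b hb hbJ] at hb0; exact lt_irrefl _ hb0
    have hxb : x b = a := by
      by_contra hne
      -- another coordinate of `x b` is positive
      have h1 := hx.2 b hbJ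
      have h2 := simple_pos hB ha h1 hne
      -- apply a coordinate different from `a`
      have hex : ∃ d ∈ Δ, d ≠ a ∧ 0 < cf hB d (x b) := by
        by_contra! hcc
        have h3 : ∃ d ∈ Δ, 0 < cf hB d (R.refl a (x b)) := exists_cf_pos hB h2
        have h4 : ∃ d ∈ Δ, 0 < cf hB d (x b) := exists_cf_pos hB h1
        have h5 : x b = cf hB a (x b) • a := by
          apply cf_ext hB
          intro d hd
          rw [map_smul, smul_eq_mul]
          by_cases hda : d = a
          · subst hda; rw [cf_self hB hd, mul_one]
          · rw [cf_ne hB ha hda, mul_zero]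
            exact le_antisymm (hcc d hd hda) (pos_nonneg hB h1 d)
        rcases R.reduced a hap (cf hB a (x b)) (h5 ▸ hB.pos_sub h1) with h6 | h6
        · rw [h6, one_smul] at h5; exact hne h5
        · linarith [pos_nonneg hB h1 a]
      obtain ⟨d, hd, hda, hd0⟩ := hex
      have h3 : cf hB d a = 0 := cf_ne hB ha hda
      have h4 := lin_sum hB ((cf hB d).comp (x : V →ₗ[ℝ] V)) (x⁻¹ a)
      simp only [LinearMap.comp_apply, LinearEquiv.coe_coe, app_inv] at h4
      rw [h3] at h4
      have h5 : 0 < ∑ e ∈ dset hB, cf hB e (x⁻¹ a) • cf hB d (x e) := by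
        apply Finset.sum_pos'
        · intro e he
          rw [mem_dset] at he
          by_cases heJ : e ∈ J
          · exact mul_nonneg (pos_nonneg hB hpos e) (pos_nonneg hB (hx.2 e heJ) d)
          · rw [hc e he heJ]; simp
        · exact ⟨b, (mem_dset hB).2 hb, mul_pos hb0 hd0⟩
      linarith
    apply proj_eq hB hJ hpJ hsw hx
    have h6 := refl_conj hx.1 (hB.dphi hb)
    rw [hxb] at h6
    have h7 : x⁻¹ * (R.refl a * w) = R.refl b * (x⁻¹ * w) := by
      rw [inv_mul_eq_iff_eq_mul, ← mul_assoc x, ← h6]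
      simp [mul_assoc]
    rw [h7]
    exact mul_mem (refl_mem_WsubJ hbJ) hv

/-- elementary steps in `W` -/
def Step (R : RootSystemData V) (Pos Δ : Set V) (H : Subgroup (V ≃ₗ[ℝ] V))
    (w w' : V ≃ₗ[ℝ] V) : Prop :=
  (∃ u ∈ H, w' = u * w) ∨ (∃ a ∈ Δ, w⁻¹ a ∈ Pos ∧ w' = R.refl a * w)

lemma seq_of_reach {X : Type} {r : X → X → Prop} {x y : X} (h : Relation.ReflTransGen r x y) :
    ∃ (t : ℕ) (ws : ℕ → X), ws 0 = x ∧ ws t = y ∧ ∀ i, i < t → r (ws i) (ws (i + 1)) := by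
  induction h with
  | refl => exact ⟨0, fun _ => x, rfl, rfl, by simp⟩
  | @tail b c _ hbc ih =>
    obtain ⟨t, ws, h0, ht, hs⟩ := ih
    refine ⟨t + 1, fun i => if i ≤ t then ws i else c, by simp [h0], by simp, ?_⟩
    intro i hi
    rcases Nat.lt_succ_iff_lt_or_eq.1 hi with h | h
    · have h1 : i ≤ t := h.le
      have h2 : i + 1 ≤ t := h
      simp only [h1, h2, if_true]; exact hs i h
    · subst h; simp [ht, hbc]

lemma reach_one (hB : IsBase R Pos Δ) (H : Subgroup (V ≃ₗ[ℝ] V)) {w : V ≃ₗ[ℝ] V}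
    (hw : w ∈ weylGroup R) : Relation.ReflTransGen (Step R Pos Δ H) 1 w := by
  induction hn : (invs Pos w).ncard generalizing w with
  | zero =>
    have : invs Pos w = ∅ := (Set.ncard_eq_zero (invs_finite hB w)).1 hn
    rw [eq_one_of hB hw fun γ hγ => by_contra fun h => by
      have : γ ∈ invs Pos w := ⟨hγ, h⟩
      simp_all]
  | succ n ih =>
    have hex : ∃ a ∈ Δ, w⁻¹ a ∉ Pos := by
      by_contra! hc
      have h1 : w⁻¹ = 1 := by
        apply eq_one_of hB (inv_mem hw)
        intro γ hγ
        exact WupJ_pos hB (J := Δ) ⟨inv_mem hw, hc⟩ hγ (fun a ha h => absurd ha h)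
      rw [inv_eq_one] at h1
      subst h1
      have : invs Pos (1 : V ≃ₗ[ℝ] V) = ∅ := by ext γ; simp [invs]
      rw [this] at hn; simp at hn
    obtain ⟨a, ha, h⟩ := hex
    have hap := hB.dphi ha
    have h1 := ninv_down hB hw ha h
    have hsw := mul_mem (refl_mem_weyl hap) hw
    refine Relation.ReflTransGen.tail (ih hsw (by omega)) (Or.inr ⟨a, ha, ?_, ?_⟩)
    · rw [mul_inv_rev, refl_inv hap]
      change w⁻¹ (R.refl a a) ∈ Pos
      rw [refl_self hap, map_neg]
      exact hB.neg_pos (weyl_mem (inv_mem hw) _ hap) h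
    · rw [← mul_assoc, refl_mul_self hap, one_mul]

lemma final_aux (hB : IsBase R Pos Δ) (H : Subgroup (V ≃ₗ[ℝ] V)) (hH : H ≤ weylGroup R)
    {J : Set V} (hJ : J ⊆ Δ)
    {pJ : (V ≃ₗ[ℝ] V) → (V ≃ₗ[ℝ] V)} (hpJ : IsProjJ R Pos J pJ)
    {wD : V ≃ₗ[ℝ] V} (hwD : IsLongestIn R Δ (weylGroup R) wD)
    {wJ : V ≃ₗ[ℝ] V} (hwJ : IsLongestIn R Δ (WsubJ R J) wJ)
    {w : V ≃ₗ[ℝ] V} (hw : w ∈ WupJ R Pos J)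
    (hr : Relation.ReflTransGen (Step R Pos Δ H) wD w) :
    ∃ (t : ℕ) (ws : ℕ → (V ≃ₗ[ℝ] V)),
      (∀ i, i ≤ t → ws i ∈ weylGroup R) ∧
      pJ (ws 0) = wD * wJ ∧ pJ (ws t) = w ∧
      ∀ i, 1 ≤ i → i ≤ t →
        (∃ u ∈ H, pJ (ws i) = pJ (u * ws (i - 1))) ∨
        (len R Δ (pJ (ws (i - 1))) < len R Δ (pJ (ws i)) ∧
          ∃ s ∈ refls R Δ, pJ (ws i) = pJ (s * ws (i - 1))) := by
  obtain ⟨t, ws, h0, ht, hs⟩ := seq_of_reach hr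
  have hmem : ∀ i, i ≤ t → ws i ∈ weylGroup R := by
    intro i
    induction i with
    | zero => intro _; rw [h0]; exact hwD.1
    | succ i ih =>
      intro hi
      have h1 := ih (by omega)
      rcases hs i (by omega) with ⟨u, hu, h2⟩ | ⟨a, ha, _, h2⟩
      · rw [h2]; exact mul_mem (hH hu) h1
      · rw [h2]; exact mul_mem (refl_mem_weyl (hB.dphi ha)) h1
  refine ⟨t, ws, hmem, ?_, ?_, ?_⟩
  · rw [h0]
    have hJW := WsubJ_le_weyl hB hJ hwJ.1
    apply proj_eq hB hJ hpJ hwD.1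
    · refine ⟨mul_mem hwD.1 hJW, fun a ha => ?_⟩
      have h1 := hB.neg_pos (weyl_mem hJW _ (hB.dphi (hJ ha))) (longest_neg hB hJ hwJ ha)
      rw [weyl_eq hB] at hwD
      have h2 := longest_in hB le_rfl hwD h1 (fun a ha h => absurd ha h)
      have h3 := hB.neg_pos (weyl_mem (WsubJ_le_weyl hB le_rfl hwD.1) _ (hB.pos_sub h1)) h2
      rw [map_neg, neg_neg] at h3
      exact h3
    · rw [mul_inv_rev, inv_mul_cancel_right]
      exact inv_mem hwJ.1
  · rw [ht]
    apply proj_eq hB hJ hpJ hw.1 hw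
    rw [inv_mul_cancel]; exact one_mem _
  · intro i hi hit
    obtain ⟨j, rfl⟩ : ∃ j, i = j + 1 := ⟨i - 1, by omega⟩
    rw [Nat.add_sub_cancel]
    rcases hs j (by omega) with ⟨u, hu, h2⟩ | ⟨a, ha, hp, h2⟩
    · left; exact ⟨u, hu, by rw [h2]⟩
    · rcases step_proj hB hJ hpJ (hmem j (by omega)) ha hp with h3 | h3
      · left; exact ⟨1, one_mem _, by rw [h2, h3, one_mul]⟩
      · right; rw [h2]; exact ⟨h3, R.refl a, ⟨a, ha, rfl⟩, rfl⟩

end Aux3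

section Aux4

variable {V : Type} [AddCommGroup V] [Module ℝ V] {R : RootSystemData V} {Pos Δ : Set V}
  {ι : Type} {parts : ι → Set V} {hr : ι → V} {hco : ι → (V →₀ ℕ)}

lemma parts_sub (hF : IsFactorDecomp R Δ parts) (c : ι) : parts c ⊆ Δ := by
  rw [← hF.union_eq]; exact Set.subset_iUnion parts c

lemma exists_part (hF : IsFactorDecomp R Δ parts) {a : V} (ha : a ∈ Δ) : ∃ c, a ∈ parts c := by
  rw [← hF.union_eq] at ha; exact Set.mem_iUnion.1 ha

lemma factor_iff (hB : IsBase R Pos Δ) (hF : IsFactorDecomp R Δ parts) (c : ι) {β : V} :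
    β ∈ PhiFactor R parts c ↔ β ∈ R.Phi ∧ ∀ b, b ∉ parts c → cf hB b β = 0 := by
  constructor
  · rintro ⟨h1, q, hq, h2⟩
    refine ⟨h1, fun b hb => ?_⟩
    rw [h2, cf_fsumZ hB q (hq.trans (parts_sub hF c))]
    have : b ∉ q.support := fun h => hb (hq h)
    simp only [Finsupp.mem_support_iff, not_not] at this
    simp [this]
  · rintro ⟨h1, h2⟩
    choose k hk using root_int hB h1
    have hsup : ∀ a, (if a ∈ parts c then k a else 0) ≠ 0 → a ∈ dset hB := by
      intro a ha
      rw [mem_dset]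
      by_contra hn
      apply ha
      rw [if_neg]
      exact fun h => hn (parts_sub hF c h)
    let q : V →₀ ℤ := Finsupp.onFinset (dset hB) (fun a => if a ∈ parts c then k a else 0) hsup
    have hq : (q.support : Set V) ⊆ parts c := by
      intro a ha
      have h3 : q a ≠ 0 := by simpa using ha
      by_contra hn
      apply h3
      simp [q, hn]
    refine ⟨h1, q, hq, ?_⟩
    apply cf_ext hB
    intro a ha
    rw [cf_fsumZ hB q (hq.trans (parts_sub hF c))]
    by_cases hac : a ∈ parts c
    · simp [q, hac, hk]
    · simp [q, hac, h2 a hac]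

lemma simple_factor (hB : IsBase R Pos Δ) (hF : IsFactorDecomp R Δ parts) {c : ι} {a : V}
    (ha : a ∈ parts c) : a ∈ PhiFactor R parts c := by
  rw [factor_iff hB hF]
  refine ⟨hB.dphi (parts_sub hF c ha), fun b hb => cf_ne hB (parts_sub hF c ha) ?_⟩
  rintro rfl; exact hb ha

lemma neg_factor (hB : IsBase R Pos Δ) (hF : IsFactorDecomp R Δ parts) {c : ι} {β : V}
    (h : β ∈ PhiFactor R parts c) : -β ∈ PhiFactor R parts c := by
  rw [factor_iff hB hF] at *
  refine ⟨neg_mem_Phi h.1, fun b hb => ?_⟩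
  rw [map_neg, h.2 b hb, neg_zero]

lemma pairing_other (hB : IsBase R Pos Δ) (hF : IsFactorDecomp R Δ parts) {c c' : ι} (hc : c' ≠ c)
    {a β : V} (ha : a ∈ parts c') (hβ : β ∈ PhiFactor R parts c) : R.pairing a β = 0 := by
  rw [factor_iff hB hF] at hβ
  rw [lin_sum hB (R.pairing a) β]
  apply Finset.sum_eq_zero
  intro b _
  by_cases hb : b ∈ parts c
  · rw [hF.ortho c' c hc a ha b hb, smul_zero]
  · rw [hβ.2 b hb, zero_smul]

lemma refl_other (hB : IsBase R Pos Δ) (hF : IsFactorDecomp R Δ parts) {c c' : ι} (hc : c' ≠ c)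
    {a β : V} (ha : a ∈ parts c') (hβ : β ∈ PhiFactor R parts c) : R.refl a β = β := by
  rw [refl_app (hB.dphi (parts_sub hF c' ha)), pairing_other hB hF hc ha hβ]; simp

lemma WsubJ_other (hB : IsBase R Pos Δ) (hF : IsFactorDecomp R Δ parts) {c c' : ι} (hc : c' ≠ c)
    {v : V ≃ₗ[ℝ] V} (hv : v ∈ WsubJ R (parts c')) :
    ∀ β ∈ PhiFactor R parts c, v β = β := by
  induction hv using Subgroup.closure_induction'' with
  | mem x hx => obtain ⟨a, ha, rfl⟩ := hx; exact fun β hβ => refl_other hB hF hc ha hβ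
  | inv_mem x hx =>
    obtain ⟨a, ha, rfl⟩ := hx
    rw [refl_inv (hB.dphi (parts_sub hF c' ha))]
    exact fun β hβ => refl_other hB hF hc ha hβ
  | one => intro x _; rfl
  | mul x y _ _ hx hy =>
    intro z hz
    change x (y z) = z
    rw [hy z hz, hx z hz]

lemma weyl_factor (hB : IsBase R Pos Δ) (hF : IsFactorDecomp R Δ parts) {c : ι}
    {w : V ≃ₗ[ℝ] V} (hw : w ∈ weylGroup R) :
    ∀ β ∈ PhiFactor R parts c, w β ∈ PhiFactor R parts c := by
  have key : ∀ a ∈ Δ, ∀ β ∈ PhiFactor R parts c, R.refl a β ∈ PhiFactor R parts c := by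
    intro a ha β hβ
    obtain ⟨c', hc'⟩ := exists_part hF ha
    by_cases h : c' = c
    · subst h
      rw [factor_iff hB hF] at *
      refine ⟨weyl_mem (refl_mem_weyl (hB.dphi ha)) _ hβ.1, fun b hb => ?_⟩
      rw [refl_app (hB.dphi ha), map_sub, map_smul, hβ.2 b hb, cf_ne hB ha (by
        rintro rfl; exact hb hc')]
      simp
    · rwa [refl_other hB hF h hc' hβ]
  rw [weyl_eq hB] at hw
  induction hw using Subgroup.closure_induction'' with
  | mem x hx => obtain ⟨a, ha, rfl⟩ := hx; exact key a ha
  | inv_mem x hx =>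
    obtain ⟨a, ha, rfl⟩ := hx; rw [refl_inv (hB.dphi ha)]; exact key a ha
  | one => intro x hx; exact hx
  | mul x y _ _ hx hy => intro z hz; exact hx _ (hy z hz)

lemma root_factor (hB : IsBase R Pos Δ) (hF : IsFactorDecomp R Δ parts) {β : V}
    (h : β ∈ R.Phi) : ∃ c, β ∈ PhiFactor R parts c := by
  have key : ∀ γ ∈ Pos, ∃ c, γ ∈ PhiFactor R parts c := by
    intro γ hγ
    obtain ⟨w, hw, a, ha, rfl⟩ := pos_conj hB hγ
    obtain ⟨c, hc⟩ := exists_part hF ha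
    exact ⟨c, weyl_factor hB hF (WsubJ_le_weyl hB le_rfl hw) _ (simple_factor hB hF hc)⟩
  rcases hB.mem_or_neg β h with h | h
  · exact key β h
  · obtain ⟨c, hc⟩ := key _ h
    refine ⟨c, ?_⟩
    have := neg_factor hB hF hc
    rwa [neg_neg] at this

lemma cf_hr (hB : IsBase R Pos Δ) (hF : IsFactorDecomp R Δ parts)
    (hH : IsHighestRootData R Pos parts hr hco) (c : ι) (b : V) : cf hB b (hr c) = hco c b := by
  rw [hH.coeff_eq c, cf_fsum hB _ ((hH.coeff_supp c).trans (parts_sub hF c))]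

lemma le_hr (hB : IsBase R Pos Δ) (hF : IsFactorDecomp R Δ parts)
    (hH : IsHighestRootData R Pos parts hr hco) {c : ι} {β : V} (hβ : β ∈ PhiFactor R parts c)
    (b : V) : cf hB b β ≤ cf hB b (hr c) := by
  obtain ⟨q, hq, h⟩ := hH.highest c β hβ
  have h1 : cf hB b (hr c - β) = q b := by
    rw [h, cf_fsum hB _ (hq.trans (parts_sub hF c))]
  rw [map_sub] at h1
  have : (0:ℝ) ≤ q b := by positivity
  linarith

lemma hco_ge (hB : IsBase R Pos Δ) (hF : IsFactorDecomp R Δ parts)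
    (hH : IsHighestRootData R Pos parts hr hco) {c : ι} {a : V} (ha : a ∈ parts c) :
    1 ≤ hco c a := by
  have := le_hr hB hF hH (simple_factor hB hF ha) a
  rw [cf_hr hB hF hH, cf_self hB (parts_sub hF c ha)] at this
  exact_mod_cast this

lemma pairing_hr (hB : IsBase R Pos Δ) (hF : IsFactorDecomp R Δ parts)
    (hH : IsHighestRootData R Pos parts hr hco) (c : ι) {η : V} (hη : η ∈ Pos) (hne : η ≠ hr c) :
    R.pairing (hr c) η = 0 ∨ R.pairing (hr c) η = 1 := by
  have hθ := hB.pos_sub (hH.mem_pos c)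
  have hηp := hB.pos_sub hη
  obtain ⟨c', hc'⟩ := root_factor hB hF hηp
  by_cases hcc : c = c'
  · subst hcc
    obtain ⟨n, hn⟩ := R.crystallographic _ hθ _ hηp
    have hs := weyl_factor hB hF (refl_mem_weyl hθ) _ hc'
    have hcoord : ∀ b, cf hB b (R.refl (hr c) η) = cf hB b η - n * cf hB b (hr c) := by
      intro b; rw [refl_app hθ, map_sub, map_smul, hn, smul_eq_mul]
    have hn1 : ¬ (n ≤ -1) := by
      intro h
      have h' : (n:ℝ) ≤ -1 := by exact_mod_cast h
      obtain ⟨b, _, hb⟩ := exists_cf_pos hB hη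
      have h1 := le_hr hB hF hH hs b
      rw [hcoord] at h1
      have h2 := pos_nonneg hB (hH.mem_pos c) b
      nlinarith
    have hn2 : ¬ (2 ≤ n) := by
      intro h
      have h' : (2:ℝ) ≤ n := by exact_mod_cast h
      apply hne
      apply cf_ext hB
      intro b _
      have h1 := le_hr hB hF hH (neg_factor hB hF hs) b
      rw [map_neg, hcoord] at h1
      have h2 := pos_nonneg hB (hH.mem_pos c) b
      have h3 := le_hr hB hF hH hc' b
      apply le_antisymm h3
      nlinarith
    have : n = 0 ∨ n = 1 := by omega
    rcases this with rfl | rfl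
    · left; simpa using hn
    · right; simpa using hn
  · left
    rw [lin_sum hB (R.pairing (hr c)) η]
    apply Finset.sum_eq_zero
    intro b hb
    by_cases hbc : b ∈ parts c'
    · have h1 := pairing_other hB hF (Ne.symm hcc) hbc (hH.mem_factor c)
      rw [pairing_zero_symm (hB.dphi ((mem_dset hB).1 hb)) hθ h1, smul_zero]
    · rw [((factor_iff hB hF c').1 hc').2 b hbc, zero_smul]

lemma u_hr (hB : IsBase R Pos Δ) (hF : IsFactorDecomp R Δ parts)
    (hH : IsHighestRootData R Pos parts hr hco) {c : ι} {a : V} (ha : a ∈ parts c)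
    (h1 : hco c a = 1) {v' v : V ≃ₗ[ℝ] V} (hv' : IsLongestIn R Δ (WsubJ R (parts c \ {a})) v')
    (hv : IsLongestIn R Δ (WsubJ R (parts c)) v) : v' (v (hr c)) = -a := by
  have hK := parts_sub hF c
  have hK' : parts c \ {a} ⊆ Δ := Set.sdiff_subset.trans hK
  have hvW := WsubJ_le_weyl hB hK hv.1
  have hvW' := WsubJ_le_weyl hB hK' hv'.1
  have hθf := hH.mem_factor c
  have e1 : v (hr c) = - hr c := by
    apply cf_ext hB
    intro b _
    rw [map_neg]
    have h2 : -(v⁻¹ (hr c)) ∈ PhiFactor R parts c :=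
      neg_factor hB hF (weyl_factor hB hF (inv_mem hvW) _ hθf)
    have h3 := cf_nonpos hB hK hv (x := hr c - -(v⁻¹ (hr c)))
      (by intro d _; rw [map_sub]; linarith [le_hr hB hF hH h2 d])
      (by
        intro d _ hd
        rw [map_sub, ((factor_iff hB hF c).1 h2).2 d hd, ((factor_iff hB hF c).1 hθf).2 d hd,
          sub_zero]) b
    rw [sub_neg_eq_add, map_add, app_inv, map_add] at h3
    have h4 := le_hr hB hF hH (neg_factor hB hF (weyl_factor hB hF hvW _ hθf)) b
    rw [map_neg] at h4
    linarith
  have e2 : v' (hr c) = a := by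
    have haf := simple_factor hB hF ha
    have h2 := weyl_factor hB hF (inv_mem hvW') _ haf
    have hna : a ∉ parts c \ {a} := by simp
    have h5 : cf hB a (v' (hr c)) = 1 := by
      rw [cf_WsubJ hB hK' hv'.1 hna, cf_hr hB hF hH, h1]; simp
    have hpos : v' (hr c) ∈ Pos :=
      mem_pos_of hB (weyl_mem hvW' _ hθf.1) (a := a) (by rw [h5]; norm_num)
    apply cf_ext hB
    intro b hb
    by_cases hba : b = a
    · subst hba; rw [h5, cf_self hB hb]
    · have h3 := cf_nonpos hB hK' hv' (x := hr c - v'⁻¹ a)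
        (by intro d _; rw [map_sub]; linarith [le_hr hB hF hH h2 d])
        (by
          intro d hd hdK
          by_cases hda : d = a
          · subst hda
            rw [map_sub, cf_WsubJ hB hK' (inv_mem hv'.1) hna, cf_self hB hd, cf_hr hB hF hH, h1]
            simp
          · have hdc : d ∉ parts c := fun h => hdK ⟨h, hda⟩
            rw [map_sub, ((factor_iff hB hF c).1 h2).2 d hdc,
              ((factor_iff hB hF c).1 hθf).2 d hdc, sub_zero]) b
      rw [map_sub, app_inv, map_sub] at h3
      have h4 := pos_nonneg hB hpos b
      rw [cf_ne hB (hK ha) hba] at *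
      linarith
  rw [e1, map_neg, e2]

lemma WOmega_le (hB : IsBase R Pos Δ) (hF : IsFactorDecomp R Δ parts) :
    WOmega R Δ parts hco ≤ weylGroup R := by
  unfold WOmega
  rw [Subgroup.closure_le]
  intro x hx
  obtain ⟨c, hc⟩ := Set.mem_iUnion.1 hx
  rcases hc with rfl | ⟨a, ha, _, rfl⟩
  · exact one_mem _
  · have hK := parts_sub hF c
    have hK' : parts c \ {a} ⊆ Δ := Set.sdiff_subset.trans hK
    exact mul_mem (WsubJ_le_weyl hB hK' (longest_spec hB hK').1)
      (WsubJ_le_weyl hB hK (longest_spec hB hK).1)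

lemma u_mem {c : ι} {a : V} (ha : a ∈ parts c) (h1 : hco c a = 1) :
    longestElt R Δ (WsubJ R (parts c \ {a})) * longestElt R Δ (WsubJ R (parts c)) ∈
      WOmega R Δ parts hco :=
  Subgroup.subset_closure (Set.mem_iUnion.2 ⟨c, Or.inr ⟨a, ha, h1, rfl⟩⟩)

lemma step_hr (hB : IsBase R Pos Δ) (hF : IsFactorDecomp R Δ parts)
    (hH : IsHighestRootData R Pos parts hr hco) (hmin : ∀ c, ∃ a ∈ parts c, hco c a = 1)
    (c : ι) {w : V ≃ₗ[ℝ] V} (hw : w ∈ weylGroup R) (h : w⁻¹ (hr c) ∉ Pos) :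
    Relation.ReflTransGen (Step R Pos Δ (WOmega R Δ parts hco)) w (R.refl (hr c) * w) := by
  obtain ⟨a, ha, h1⟩ := hmin c
  have hK := parts_sub hF c
  have hK' : parts c \ {a} ⊆ Δ := Set.sdiff_subset.trans hK
  have hu := u_mem (R := R) (Δ := Δ) ha h1
  have hua : (longestElt R Δ (WsubJ R (parts c \ {a})) * longestElt R Δ (WsubJ R (parts c))) (hr c)
      = -a := u_hr hB hF hH ha h1 (longest_spec hB hK') (longest_spec hB hK)
  set u := longestElt R Δ (WsubJ R (parts c \ {a})) * longestElt R Δ (WsubJ R (parts c))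
  have huW := WOmega_le hB hF hu
  have hθ := hB.pos_sub (hH.mem_pos c)
  have hap := hB.dphi (hK ha)
  have e : R.refl (hr c) * w = u⁻¹ * (R.refl a * (u * w)) := by
    have := refl_conj huW hθ
    rw [hua, refl_neg hap] at this
    rw [← mul_assoc (R.refl a), this]
    simp [mul_assoc]
  have hpos : (u * w)⁻¹ a ∈ Pos := by
    have h2 : u⁻¹ a = - hr c := by
      rw [← inv_app u (hr c), hua, map_neg, neg_neg]
    rw [mul_inv_rev]
    change w⁻¹ (u⁻¹ a) ∈ Pos
    rw [h2, map_neg]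
    exact hB.neg_pos (weyl_mem (inv_mem hw) _ hθ) h
  rw [e]
  have s1 : Step R Pos Δ (WOmega R Δ parts hco) w (u * w) := Or.inl ⟨u, hu, rfl⟩
  have s2 : Step R Pos Δ (WOmega R Δ parts hco) (u * w) (R.refl a * (u * w)) :=
    Or.inr ⟨a, hK ha, hpos, rfl⟩
  have s3 : Step R Pos Δ (WOmega R Δ parts hco) (R.refl a * (u * w))
    (u⁻¹ * (R.refl a * (u * w))) := Or.inl ⟨u⁻¹, inv_mem hu, rfl⟩
  exact ((Relation.ReflTransGen.single s1).tail s2).tail s3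

/-- indicator of not being positive -/
noncomputable def ind (Pos : Set V) (x : V) : ℝ := if x ∈ Pos then 0 else 1

lemma ind_pos {x : V} (h : x ∈ Pos) : ind Pos x = 0 := by simp [ind, h]
lemma ind_neg {x : V} (h : x ∉ Pos) : ind Pos x = 1 := by simp [ind, h]

lemma stepb (hB : IsBase R Pos Δ) (hF : IsFactorDecomp R Δ parts)
    (hH : IsHighestRootData R Pos parts hr hco) (c : ι) {η : V} (hη : η ∈ R.Phi)
    (h1 : η ≠ hr c) (h2 : η ≠ - hr c) :
    R.pairing (hr c) η - ind Pos (R.refl (hr c) η) = - ind Pos η := by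
  have hθ := hB.pos_sub (hH.mem_pos c)
  have hs := weyl_mem (refl_mem_weyl hθ) _ hη
  have hps : R.pairing (hr c) (R.refl (hr c) η) = - R.pairing (hr c) η := by
    rw [refl_app hθ, map_sub, map_smul, R.pairing_self _ hθ, smul_eq_mul]; ring
  have hself := R.pairing_self _ hθ
  by_cases hp : η ∈ Pos
  · rcases pairing_hr hB hF hH c hp h1 with h | h
    · rw [refl_app hθ, h]; simp
    · have : R.refl (hr c) η ∉ Pos := by
        intro h3
        have := pairing_hr hB hF hH c h3 (by
          intro h4; rw [h4, hself] at hps; linarith)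
        rcases this with h5 | h5 <;> linarith
      rw [h, ind_pos hp, ind_neg this]; norm_num
  · have hn := hB.neg_pos hη hp
    rcases pairing_hr hB hF hH c hn (by rintro h; exact h2 (by rw [← h, neg_neg])) with h | h
    · rw [map_neg, neg_eq_zero] at h
      rw [refl_app hθ, h]; simp
    · rw [map_neg] at h
      have : R.refl (hr c) η ∈ Pos := by
        by_contra h3
        have h3 := hB.neg_pos hs h3
        have := pairing_hr hB hF hH c h3 (by
          intro h4
          have h5 : R.pairing (hr c) (-(R.refl (hr c) η)) = 2 := by rw [h4, hself]
          rw [map_neg, hps] at h5; linarith)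
        rw [map_neg, hps] at this
        rcases this with h5 | h5 <;> linarith
      rw [ind_neg hp, ind_pos this]; linarith

lemma terminal (hB : IsBase R Pos Δ) (hF : IsFactorDecomp R Δ parts)
    (hH : IsHighestRootData R Pos parts hr hco) {w : V ≃ₗ[ℝ] V} (hw : w ∈ weylGroup R)
    {μ : V →ₗ[ℝ] ℝ} (hμ : ∀ γ ∈ Pos, ind Pos (w γ) ≤ μ γ)
    (ha : ∀ a ∈ Δ, w⁻¹ a ∈ Pos → μ (w⁻¹ a) ≤ 0)
    (hb : ∀ c, w⁻¹ (hr c) ∉ Pos → μ (-(w⁻¹ (hr c))) ≤ 1) :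
    ∀ γ ∈ Pos, μ γ = ind Pos (w γ) := by
  have h1 : ∀ a ∈ Δ, μ (w⁻¹ a) ≤ 0 := by
    intro a haΔ
    by_cases h : w⁻¹ a ∈ Pos
    · exact ha a haΔ h
    · have h2 := hB.neg_pos (weyl_mem (inv_mem hw) _ (hB.dphi haΔ)) h
      have h3 := hμ _ h2
      rw [map_neg, app_inv, ind_neg (hB.neg_not_pos (hB.delta_sub haΔ)), map_neg] at h3
      linarith
  have h2 : ∀ c, -1 ≤ μ (w⁻¹ (hr c)) := by
    intro c
    by_cases h : w⁻¹ (hr c) ∈ Pos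
    · have h3 := hμ _ h
      rw [app_inv, ind_pos (hH.mem_pos c)] at h3
      linarith
    · have := hb c h
      rw [map_neg] at this; linarith
  have h3 : ∀ x : V, (∀ a ∈ Δ, 0 ≤ cf hB a x) → μ (w⁻¹ x) ≤ 0 := by
    intro x hx
    have := lin_sum hB (μ.comp ((w⁻¹ : V ≃ₗ[ℝ] V) : V →ₗ[ℝ] V)) x
    simp only [LinearMap.comp_apply, LinearEquiv.coe_coe] at this
    rw [this]
    apply Finset.sum_nonpos
    intro a ha'
    rw [mem_dset] at ha'
    exact mul_nonpos_of_nonneg_of_nonpos (hx a ha') (h1 a ha')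
  have h4 : ∀ η ∈ Pos, μ (w⁻¹ η) ≤ 0 := fun η hη => h3 η fun a _ => pos_nonneg hB hη a
  have h5 : ∀ η ∈ Pos, -1 ≤ μ (w⁻¹ η) := by
    intro η hη
    obtain ⟨c, hc⟩ := root_factor hB hF (hB.pos_sub hη)
    have h6 := h3 (hr c - η) (by intro a _; rw [map_sub]; linarith [le_hr hB hF hH hc a])
    rw [map_sub, map_sub] at h6
    linarith [h2 c]
  intro γ hγ
  apply le_antisymm _ (hμ γ hγ)
  by_cases h : w γ ∈ Pos
  · rw [ind_pos h]
    have := h4 _ h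
    rwa [inv_app] at this
  · rw [ind_neg h]
    have := h5 _ (hB.neg_pos (weyl_mem hw _ (hB.pos_sub hγ)) h)
    rw [map_neg, inv_app, map_neg] at this
    linarith

lemma descent (hB : IsBase R Pos Δ) (hF : IsFactorDecomp R Δ parts)
    (hH : IsHighestRootData R Pos parts hr hco) (hmin : ∀ c, ∃ a ∈ parts c, hco c a = 1)
    (P : Finset V) (hP : ∀ x, x ∈ P ↔ x ∈ Pos) :
    ∀ (n : ℕ) (w : V ≃ₗ[ℝ] V) (μ : V →ₗ[ℝ] ℝ), w ∈ weylGroup R →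
      (∀ γ ∈ Pos, ∃ k : ℤ, μ γ = k) → (∀ γ ∈ Pos, ind Pos (w γ) ≤ μ γ) →
      ∑ γ ∈ P, (μ γ - ind Pos (w γ)) < n →
      ∃ w' ∈ weylGroup R,
        Relation.ReflTransGen (Step R Pos Δ (WOmega R Δ parts hco)) w w' ∧
        ∃ μ' : V →ₗ[ℝ] ℝ, ∀ γ ∈ Pos, μ' γ = ind Pos (w' γ) := by
  intro n
  induction n with
  | zero =>
    intro w μ _ _ hμ hs
    have : 0 ≤ ∑ γ ∈ P, (μ γ - ind Pos (w γ)) :=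
      Finset.sum_nonneg fun γ hγ => by linarith [hμ γ ((hP γ).1 hγ)]
    push_cast at hs; linarith
  | succ n ih =>
    intro w μ hw hint hμ hs
    have next : ∀ (w1 : V ≃ₗ[ℝ] V) (μ1 : V →ₗ[ℝ] ℝ) (γ0 : V), w1 ∈ weylGroup R → γ0 ∈ Pos →
        (∀ γ ∈ Pos, ∃ k : ℤ, μ1 γ = k) → ind Pos (w γ0) + 1 ≤ μ γ0 →
        (∀ γ ∈ Pos, μ1 γ - ind Pos (w1 γ) = μ γ - ind Pos (w γ) - if γ = γ0 then 1 else 0) →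
        Relation.ReflTransGen (Step R Pos Δ (WOmega R Δ parts hco)) w w1 →
        ∃ w' ∈ weylGroup R,
        Relation.ReflTransGen (Step R Pos Δ (WOmega R Δ parts hco)) w w' ∧
        ∃ μ' : V →ₗ[ℝ] ℝ, ∀ γ ∈ Pos, μ' γ = ind Pos (w' γ) := by
      intro w1 μ1 γ0 hw1 hγ0 hint1 hge heq hreach
      obtain ⟨w', hw', hr', hμ'⟩ := ih w1 μ1 hw1 hint1 (by
        intro γ hγ
        have h1 := heq γ hγ
        have h2 := hμ γ hγ
        split_ifs at h1 with h3
        · subst h3; linarith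
        · linarith) (by
        rw [Finset.sum_congr rfl fun γ hγ => heq γ ((hP γ).1 hγ), Finset.sum_sub_distrib,
          Finset.sum_ite_eq', if_pos ((hP γ0).2 hγ0)]
        push_cast at hs; linarith)
      exact ⟨w', hw', hreach.trans hr', hμ'⟩
    by_cases hA : ∃ a ∈ Δ, w⁻¹ a ∈ Pos ∧ 0 < μ (w⁻¹ a)
    · obtain ⟨a, ha, hp, h0⟩ := hA
      have hap := hB.dphi ha
      apply next (R.refl a * w) μ (w⁻¹ a) (mul_mem (refl_mem_weyl hap) hw) hp hint
      · obtain ⟨k, hk⟩ := hint _ hp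
        rw [app_inv, ind_pos (hB.delta_sub ha), zero_add]
        rw [hk] at h0 ⊢
        exact_mod_cast h0
      · intro γ hγ
        have h1 := Set.ext_iff.1 (invs_up hB hw ha hp) γ
        simp only [invs, Set.mem_ofPred_eq, Set.mem_insert_iff, hγ, true_and] at h1
        split_ifs with h2
        · subst h2
          rw [ind_neg (h1.2 (Or.inl rfl)), app_inv, ind_pos (hB.delta_sub ha)]; ring
        · simp only [h2, false_or] at h1
          by_cases h3 : w γ ∈ Pos
          · rw [ind_pos h3, ind_pos (by_contra fun h4 => h1.1 h4 h3)]; ring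
          · rw [ind_neg h3, ind_neg (h1.2 h3)]; ring
      · exact Relation.ReflTransGen.single (Or.inr ⟨a, ha, hp, rfl⟩)
    by_cases hBc : ∃ c, w⁻¹ (hr c) ∉ Pos ∧ 1 < μ (-(w⁻¹ (hr c)))
    · obtain ⟨c, hn, h1⟩ := hBc
      have hθ := hB.pos_sub (hH.mem_pos c)
      have hwθ := weyl_mem (inv_mem hw) _ hθ
      have hγ0 := hB.neg_pos hwθ hn
      have hpair : ∀ γ, R.pairing (-(w⁻¹ (hr c))) γ = - R.pairing (hr c) (w γ) := by
        intro γ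
        rw [pairing_neg hwθ, ← pairing_weyl hw hwθ, app_inv]
      apply next (R.refl (hr c) * w) (μ - R.pairing (-(w⁻¹ (hr c)))) (-(w⁻¹ (hr c)))
        (mul_mem (refl_mem_weyl hθ) hw) hγ0
      · intro γ hγ
        obtain ⟨k, hk⟩ := hint γ hγ
        obtain ⟨m, hm⟩ := R.crystallographic _ (hB.pos_sub hγ0) _ (hB.pos_sub hγ)
        exact ⟨k - m, by rw [LinearMap.sub_apply, hk, hm]; push_cast; ring⟩
      · obtain ⟨k, hk⟩ := hint _ hγ0
        rw [map_neg w, app_inv, ind_neg (hB.neg_not_pos (hH.mem_pos c))]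
        rw [hk] at h1 ⊢
        have h1 : (1:ℤ) < k := by exact_mod_cast h1
        have : (2:ℤ) ≤ k := by omega
        have : (2:ℝ) ≤ k := by exact_mod_cast this
        linarith
      · intro γ hγ
        rw [LinearMap.sub_apply, hpair]
        change _ - ind Pos (R.refl (hr c) (w γ)) = _
        split_ifs with h2
        · rw [h2, map_neg w, app_inv, map_neg (R.refl (hr c)), refl_self hθ, neg_neg,
            ind_pos (hH.mem_pos c), ind_neg (hB.neg_not_pos (hH.mem_pos c)), map_neg (R.pairing _),
            R.pairing_self _ hθ]
          ring
        · have h3 := stepb hB hF hH c (weyl_mem hw _ (hB.pos_sub hγ))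
            (by intro h3; apply hn; rw [← h3, inv_app]; exact hγ)
            (by intro h3; apply h2; rw [← map_neg, ← h3, inv_app])
          linarith
      · exact step_hr hB hF hH hmin c hw hn
    push Not at hA hBc
    exact ⟨w, hw, Relation.ReflTransGen.refl, μ, terminal hB hF hH hw hμ hA hBc⟩

end Aux4

section Aux5

variable {V : Type} [AddCommGroup V] [Module ℝ V] {R : RootSystemData V} {Pos Δ : Set V}
  {ι : Type} {parts : ι → Set V} {hr : ι → V} {hco : ι → (V →₀ ℕ)}

lemma coeff_one (hB : IsBase R Pos Δ) (hF : IsFactorDecomp R Δ parts)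
    (hH : IsHighestRootData R Pos parts hr hco) {c : ι} {g : V →ₗ[ℝ] ℝ}
    (h0 : ∀ b ∈ Δ, 0 ≤ g b) (h1 : g (hr c) ≤ 1) {a : V} (ha : a ∈ parts c) (hga : 1 ≤ g a) :
    hco c a = 1 ∧ ∀ b ∈ parts c, b ≠ a → g b = 0 := by
  have hsum : g (hr c) = ∑ b ∈ dset hB, (hco c b : ℝ) * g b := by
    rw [lin_sum hB g (hr c)]
    exact Finset.sum_congr rfl fun b _ => by rw [cf_hr hB hF hH, smul_eq_mul]
  have hnn : ∀ b ∈ dset hB, 0 ≤ (hco c b : ℝ) * g b := fun b hb =>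
    mul_nonneg (by positivity) (h0 b ((mem_dset hB).1 hb))
  have haD := (mem_dset hB).2 (parts_sub hF c ha)
  have hge := hco_ge hB hF hH ha
  have hge' : (1:ℝ) ≤ hco c a := by exact_mod_cast hge
  constructor
  · have h2 := Finset.single_le_sum hnn haD
    rw [← hsum] at h2
    have h3 : (hco c a : ℝ) ≤ 1 := by nlinarith
    have h4 : hco c a ≤ 1 := by exact_mod_cast h3
    omega
  · intro b hb hba
    have hbD := (mem_dset hB).2 (parts_sub hF c hb)
    have h2 : ∑ x ∈ ({a, b} : Finset V), (hco c x : ℝ) * g x ≤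
        ∑ b ∈ dset hB, (hco c b : ℝ) * g b :=
      Finset.sum_le_sum_of_subset_of_nonneg (by
        intro x hx
        simp only [Finset.mem_insert, Finset.mem_singleton] at hx
        rcases hx with rfl | rfl <;> assumption) (fun x hx _ => hnn x hx)
    rw [Finset.sum_pair (Ne.symm hba), ← hsum] at h2
    have hgb : (1:ℝ) ≤ hco c b := by exact_mod_cast hco_ge hB hF hH hb
    have := h0 b (parts_sub hF c hb)
    nlinarith

lemma u_inv_zero (hB : IsBase R Pos Δ) (hF : IsFactorDecomp R Δ parts) {c : ι} {a : V}
    {v' v : V ≃ₗ[ℝ] V}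
    (hv' : IsLongestIn R Δ (WsubJ R (parts c \ {a})) v')
    (hv : IsLongestIn R Δ (WsubJ R (parts c)) v) {δ : V} (hδ : δ ∈ Pos)
    (hδc : δ ∈ PhiFactor R parts c) : v⁻¹ (v'⁻¹ δ) ∈ Pos ↔ cf hB a δ = 0 := by
  have hK := parts_sub hF c
  have hK' : parts c \ {a} ⊆ Δ := Set.sdiff_subset.trans hK
  have hvi := longest_inv hB hK hv
  have hvi' := longest_inv hB hK' hv'
  have hW' := WsubJ_le_weyl hB hK' hvi'.1
  have hW := WsubJ_le_weyl hB hK hvi.1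
  have hf' := weyl_factor hB hF hW' _ hδc
  have hout : ∀ x ∈ PhiFactor R parts c, x ∈ Pos → v⁻¹ x ∉ Pos := fun x hx hxp =>
    longest_in hB hK hvi hxp fun b _ hb => ((factor_iff hB hF c).1 hx).2 b hb
  constructor
  · intro h
    by_contra hne
    exact hout _ hf' ((WsubJ_out hB hK' hvi'.1 hδc.1 (b := a) (by simp) hne).2 hδ) h
  · intro h
    have h1 : v'⁻¹ δ ∉ Pos := by
      apply longest_in hB hK' hvi' hδ
      intro b hb hbK
      by_cases hba : b = a
      · rw [hba, h]
      · exact ((factor_iff hB hF c).1 hδc).2 b fun h2 => hbK ⟨h2, hba⟩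
    have h2 := hout _ (neg_factor hB hF hf') (hB.neg_pos hf'.1 h1)
    by_contra h3
    apply h2
    rw [map_neg]
    exact hB.neg_pos (weyl_mem hW _ hf'.1) h3

lemma omega_mem (hB : IsBase R Pos Δ) (hF : IsFactorDecomp R Δ parts)
    (hH : IsHighestRootData R Pos parts hr hco) :
    ∀ (n : ℕ) (w : V ≃ₗ[ℝ] V) (μ : V →ₗ[ℝ] ℝ), w ∈ weylGroup R →
      ((dset hB).filter (fun a => μ a ≠ 0)).card = n →
      (∀ γ ∈ Pos, μ γ = ind Pos (w γ)) → w ∈ WOmega R Δ parts hco := by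
  intro n
  induction n using Nat.strong_induction_on with
  | _ n ih =>
  intro w μ hw hn hμ
  by_cases hex : ∃ a ∈ Δ, μ a ≠ 0
  swap
  · push Not at hex
    have : w = 1 := by
      apply eq_one_of hB hw
      intro γ hγ
      by_contra h
      have h1 := hμ γ hγ
      rw [ind_neg h, lin_sum hB μ γ, Finset.sum_eq_zero] at h1
      · norm_num at h1
      · intro b hb; rw [hex b ((mem_dset hB).1 hb), smul_zero]
    rw [this]; exact one_mem _
  obtain ⟨a, haΔ, hane⟩ := hex
  obtain ⟨c, ha⟩ := exists_part hF haΔ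
  have h01 : ∀ γ ∈ Pos, μ γ = 0 ∧ w γ ∈ Pos ∨ μ γ = 1 ∧ w γ ∉ Pos := by
    intro γ hγ
    by_cases h : w γ ∈ Pos
    · left; rw [hμ γ hγ, ind_pos h]; exact ⟨rfl, h⟩
    · right; rw [hμ γ hγ, ind_neg h]; exact ⟨rfl, h⟩
  have hμa : μ a = 1 := by
    rcases h01 a (hB.delta_sub haΔ) with h | h
    · exact absurd h.1 hane
    · exact h.1
  obtain ⟨hc1, hz⟩ := coeff_one hB hF hH (g := μ)
    (by intro b hb; rcases h01 b (hB.delta_sub hb) with h | h <;> rw [h.1] <;> norm_num)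
    (by rcases h01 _ (hH.mem_pos c) with h | h <;> rw [h.1]; norm_num) ha hμa.ge
  have hK := parts_sub hF c
  have hK' : parts c \ {a} ⊆ Δ := Set.sdiff_subset.trans hK
  have hu := u_mem (R := R) (Δ := Δ) ha hc1
  have hv' := longest_spec hB hK'
  have hv := longest_spec hB hK
  set v' := longestElt R Δ (WsubJ R (parts c \ {a}))
  set v := longestElt R Δ (WsubJ R (parts c))
  have huW := WOmega_le hB hF hu
  let μ' : V →ₗ[ℝ] ℝ := ∑ b ∈ dset hB, (if b ∈ parts c then 0 else μ b) • cf hB b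
  have hμ' : ∀ x, μ' x = ∑ b ∈ dset hB, cf hB b x * (if b ∈ parts c then 0 else μ b) := by
    intro x; simp only [μ', LinearMap.sum_apply, LinearMap.smul_apply, smul_eq_mul]
    exact Finset.sum_congr rfl fun b _ => mul_comm _ _
  have hμ'b : ∀ b ∈ Δ, μ' b = if b ∈ parts c then 0 else μ b := by
    intro b hb
    rw [hμ', Finset.sum_eq_single b]
    · rw [cf_self hB hb, one_mul]
    · intro d hd hdb; rw [cf_ne hB hb hdb, zero_mul]
    · intro h; exact absurd ((mem_dset hB).2 hb) h
  have hμc : ∀ x ∈ PhiFactor R parts c, μ x = cf hB a x := by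
    intro x hx
    rw [lin_sum hB μ x, Finset.sum_eq_single a]
    · rw [hμa, smul_eq_mul, mul_one]
    · intro b hb hba
      by_cases hbc : b ∈ parts c
      · rw [hz b hbc hba, smul_zero]
      · rw [((factor_iff hB hF c).1 hx).2 b hbc, zero_smul]
    · intro h; exact absurd ((mem_dset hB).2 haΔ) h
  have hmem : w * (v' * v) ∈ WOmega R Δ parts hco := by
    apply ih _ _ (w * (v' * v)) μ' (mul_mem hw huW) rfl
    · intro γ hγ
      change _ = ind Pos (w (v' (v γ)))
      obtain ⟨c', hc'⟩ := root_factor hB hF (hB.pos_sub hγ)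
      by_cases hcc : c = c'
      · subst hcc
        have h1 : μ' γ = 0 := by
          rw [hμ']
          apply Finset.sum_eq_zero
          intro b _
          by_cases hbc : b ∈ parts c
          · rw [if_pos hbc, mul_zero]
          · rw [((factor_iff hB hF c).1 hc').2 b hbc, zero_mul]
        rw [h1, ind_pos]
        have hδf : v' (v γ) ∈ PhiFactor R parts c := weyl_factor hB hF huW _ hc'
        have hback : v⁻¹ (v'⁻¹ (v' (v γ))) = γ := by rw [inv_app, inv_app]
        generalize v' (v γ) = δ at hδf hback
        by_cases hδ : δ ∈ Pos
        · have h2 := (u_inv_zero hB hF hv' hv hδ hδf).1 (by rw [hback]; exact hγ)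
          rw [← hμc δ hδf] at h2
          rcases h01 δ hδ with h | h
          · exact h.2
          · rw [h.1] at h2; norm_num at h2
        · have hδn := hB.neg_pos hδf.1 hδ
          have h2 := (u_inv_zero hB hF hv' hv hδn (neg_factor hB hF hδf)).not.1 (by
            rw [map_neg, map_neg, hback]; exact hB.neg_not_pos hγ)
          rw [← hμc _ (neg_factor hB hF hδf)] at h2
          rcases h01 _ hδn with h | h
          · exact absurd h.1 h2
          · have h3 := hB.neg_pos (weyl_mem hw _ (hB.pos_sub hδn)) h.2
            rwa [map_neg, neg_neg] at h3
      · have e1 : v γ = γ := WsubJ_other hB hF hcc hv.1 γ hc'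
        have e2 : v' γ = γ := WsubJ_other hB hF hcc (WsubJ_mono Set.sdiff_subset hv'.1) γ hc'
        rw [e1, e2, ← hμ γ hγ, hμ', lin_sum hB μ γ]
        apply Finset.sum_congr rfl
        intro b _
        by_cases hbc : b ∈ parts c
        · have : b ∉ parts c' := fun h => Set.disjoint_left.1 (hF.disj c c' hcc) hbc h
          rw [((factor_iff hB hF c').1 hc').2 b this]; simp
        · rw [if_neg hbc, smul_eq_mul]
    · rw [← hn]
      apply Finset.card_lt_card
      rw [Finset.ssubset_iff_of_subset]
      · refine ⟨a, ?_, ?_⟩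
        · simp [mem_dset, haΔ, hane]
        · simp [hμ'b a haΔ, ha]
      · intro b hb
        simp only [Finset.mem_filter, mem_dset] at hb ⊢
        refine ⟨hb.1, ?_⟩
        rw [hμ'b b hb.1] at hb
        intro h; apply hb.2; rw [h]; simp
  have := mul_mem hmem (inv_mem hu)
  rwa [mul_inv_cancel_right] at this

lemma minuscule_of (hB : IsBase R Pos Δ) (hF : IsFactorDecomp R Δ parts)
    (hH : IsHighestRootData R Pos parts hr hco) {c : ι} (f : V →ₗ[ℝ] ℝ)
    (hf : ∀ β ∈ PhiFactor R parts c, f β = 0 ∨ f β = 1 ∨ f β = -1)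
    (hf0 : ∃ β ∈ PhiFactor R parts c, f β ≠ 0) : ∃ a ∈ parts c, hco c a = 1 := by
  have hPf : Pos.Finite := R.finite.subset hB.pos_sub
  -- maximize over the group
  obtain ⟨w, hw, hmax⟩ := Set.exists_max_image (weylGroup R : Set (V ≃ₗ[ℝ] V))
    (fun w => ∑ γ ∈ hPf.toFinset, f (w γ)) weyl_finite ⟨1, one_mem _⟩
  have hw' : w ∈ weylGroup R := hw
  have h0 : ∀ a ∈ Δ, 0 ≤ f (w a) := by
    intro a ha
    have hap := hB.dphi ha
    have h1 := hmax (w * R.refl a) (mul_mem hw (refl_mem_weyl hap))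
    have haP : a ∈ hPf.toFinset := by simpa using hB.delta_sub ha
    simp only [LinearEquiv.mul_apply] at h1
    rw [← Finset.add_sum_erase _ _ haP, ← Finset.add_sum_erase _ (fun x => f (w x)) haP] at h1
    have h2 : ∑ x ∈ hPf.toFinset.erase a, f (w (R.refl a x)) =
        ∑ x ∈ hPf.toFinset.erase a, f (w x) := by
      have hm : ∀ x ∈ hPf.toFinset.erase a, R.refl a x ∈ hPf.toFinset.erase a := by
        intro x hx
        simp only [Finset.mem_erase, Set.Finite.mem_toFinset] at hx ⊢
        refine ⟨?_, simple_pos hB ha hx.2 hx.1⟩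
        intro h
        have h3 := congrArg (R.refl a) h
        rw [refl_refl hap, refl_self hap] at h3
        rw [h3] at hx
        exact hB.neg_not_pos (hB.delta_sub ha) hx.2
      exact Finset.sum_nbij' (fun x => R.refl a x) (fun x => R.refl a x) hm hm
        (fun x _ => refl_refl hap x) (fun x _ => refl_refl hap x) (fun x _ => rfl)
    rw [h2, refl_self hap, map_neg, map_neg] at h1
    linarith
  let g : V →ₗ[ℝ] ℝ := f.comp (w : V →ₗ[ℝ] V)
  have hg : ∀ x, g x = f (w x) := fun _ => rfl
  have hex : ∃ a ∈ parts c, g a ≠ 0 := by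
    by_contra! hc
    obtain ⟨β, hβ, hne⟩ := hf0
    apply hne
    have hβ' := weyl_factor hB hF (inv_mem hw') _ hβ
    have : g (w⁻¹ β) = 0 := by
      rw [lin_sum hB g]
      apply Finset.sum_eq_zero
      intro b _
      by_cases hb : b ∈ parts c
      · rw [hc b hb, smul_zero]
      · rw [((factor_iff hB hF c).1 hβ').2 b hb, zero_smul]
    rwa [hg, app_inv] at this
  obtain ⟨a, ha, hga⟩ := hex
  refine ⟨a, ha, (coeff_one hB hF hH (g := g) h0 ?_ ha ?_).1⟩
  · rcases hf _ (weyl_factor hB hF hw' _ (hH.mem_factor c)) with h | h | h <;> rw [hg, h] <;>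
      norm_num
  · have h1 := h0 a (parts_sub hF c ha)
    rw [hg] at *
    rcases hf _ (weyl_factor hB hF hw' _ (simple_factor hB hF ha)) with h | h | h
    · exact absurd h hga
    · exact h.ge
    · rw [h] at h1; norm_num at h1

end Aux5

section Aux6

variable {V : Type} [AddCommGroup V] [Module ℝ V] {R : RootSystemData V} {Pos Δ : Set V}
  {ι : Type} {parts : ι → Set V} {hr : ι → V} {hco : ι → (V →₀ ℕ)}

lemma sum_eVec_mul {k : ℕ} (i : Fin k) (x : Fin k → ℝ) : ∑ j, eVec i j * x j = x i := by
  simp [eVec]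

lemma sum_eVec {k : ℕ} (i : Fin k) : ∑ j, eVec i j = 1 := by
  simp [eVec]

lemma eVec_same {k : ℕ} (i : Fin k) : eVec i i = 1 := by simp [eVec]
lemma eVec_ne {k : ℕ} {i j : Fin k} (h : i ≠ j) : eVec i j = 0 := by simp [eVec, h.symm]

lemma pair_sub {k : ℕ} {i j : Fin k} (h : i ≠ j) (x : Fin k → ℝ) :
    pairStd (eVec i - eVec j) x = x i - x j := by
  unfold pairStd
  simp only [Pi.sub_apply, sub_mul, Finset.sum_sub_distrib, sum_eVec_mul, eVec_same, eVec_ne h,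
    eVec_ne h.symm]
  ring

lemma pair_add {k : ℕ} {i j : Fin k} (h : i ≠ j) (x : Fin k → ℝ) :
    pairStd (eVec i + eVec j) x = x i + x j := by
  unfold pairStd
  simp only [Pi.add_apply, add_mul, Finset.sum_add_distrib, sum_eVec_mul, eVec_same, eVec_ne h,
    eVec_ne h.symm]
  ring

lemma pair_one {k : ℕ} (i : Fin k) (x : Fin k → ℝ) :
    pairStd (eVec i) x = 2 * x i := by
  unfold pairStd
  simp only [sum_eVec_mul, eVec_same]
  ring

lemma pair_two {k : ℕ} (i : Fin k) (x : Fin k → ℝ) :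
    pairStd ((2:ℝ) • eVec i) x = x i := by
  unfold pairStd
  simp only [Pi.smul_apply, smul_eq_mul, mul_assoc, ← Finset.mul_sum, sum_eVec_mul, eVec_same]
  ring

lemma iso_inv {k : ℕ} {Φc : Set V} {Ψ : Set (Fin k → ℝ)} (h : factorIso R Φc Ψ) :
    ∃ (φ : V → (Fin k → ℝ)) (ψ : (Fin k → ℝ) → V), (∀ x ∈ Φc, φ x ∈ Ψ) ∧
      (∀ y ∈ Ψ, ψ y ∈ Φc ∧ φ (ψ y) = y) ∧
      ∀ y ∈ Ψ, ∀ x ∈ Φc, R.pairing (ψ y) x = pairStd y (φ x) := by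
  obtain ⟨φ, hφ, hp⟩ := h
  have : ∀ y, ∃ x, y ∈ Ψ → x ∈ Φc ∧ φ x = y := by
    intro y
    by_cases hy : y ∈ Ψ
    · obtain ⟨x, hx, h⟩ := hφ.surjOn hy
      exact ⟨x, fun _ => ⟨hx, h⟩⟩
    · exact ⟨0, fun h => absurd h hy⟩
  choose ψ hψ using this
  refine ⟨φ, ψ, fun x hx => hφ.mapsTo hx, hψ, fun y hy x hx => ?_⟩
  rw [← hp _ (hψ y hy).1 x hx, (hψ y hy).2]

lemma eVec_cases {k : ℕ} (i l : Fin k) : eVec i l = 0 ∨ eVec i l = 1 := by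
  unfold eVec; split_ifs <;> simp

lemma eVec_both {k : ℕ} {i j : Fin k} (h : i ≠ j) (l : Fin k) :
    (eVec i l = 0 ∧ eVec j l = 0) ∨ (eVec i l = 1 ∧ eVec j l = 0) ∨
    (eVec i l = 0 ∧ eVec j l = 1) := by
  by_cases h1 : l = i
  · subst h1; right; left; exact ⟨eVec_same _, eVec_ne h.symm⟩
  · by_cases h2 : l = j
    · subst h2; right; right; exact ⟨eVec_ne h, eVec_same _⟩
    · left; exact ⟨eVec_ne (Ne.symm h1), eVec_ne (Ne.symm h2)⟩

lemma coordD {m : ℕ} {x : Fin m → ℝ} (hx : x ∈ stdD m) (l : Fin m) :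
    x l = 0 ∨ x l = 1 ∨ x l = -1 := by
  obtain ⟨i, j, hij, rfl | rfl | rfl | rfl⟩ := hx <;>
    simp only [Pi.add_apply, Pi.sub_apply, Pi.neg_apply] <;>
    rcases eVec_both hij l with ⟨h1, h2⟩ | ⟨h1, h2⟩ | ⟨h1, h2⟩ <;> rw [h1, h2] <;> norm_num

lemma coordB {m : ℕ} {x : Fin m → ℝ} (hx : x ∈ stdB m) (l : Fin m) :
    x l = 0 ∨ x l = 1 ∨ x l = -1 := by
  rcases hx with hx | ⟨i, rfl | rfl⟩
  · exact coordD hx l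
  · rcases eVec_cases i l with h | h <;> rw [h] <;> norm_num
  · simp only [Pi.neg_apply]
    rcases eVec_cases i l with h | h <;> rw [h] <;> norm_num

lemma coordA {m : ℕ} {x : Fin (m + 1) → ℝ} (hx : x ∈ stdA m) (l : Fin (m + 1)) :
    (x l = 0 ∨ x l = 1 ∨ x l = -1) ∧ ∑ j, x j = 0 := by
  obtain ⟨i, j, hij, rfl⟩ := hx
  refine ⟨?_, by simp [Finset.sum_sub_distrib, sum_eVec]⟩
  simp only [Pi.sub_apply]
  rcases eVec_both hij l with ⟨h1, h2⟩ | ⟨h1, h2⟩ | ⟨h1, h2⟩ <;> rw [h1, h2] <;> norm_num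

lemma coordC {m : ℕ} {x : Fin m → ℝ} (hx : x ∈ stdC m) :
    (1/2) * ∑ j, x j = 0 ∨ (1/2) * ∑ j, x j = 1 ∨ (1/2) * ∑ j, x j = -1 := by
  rcases hx with ⟨i, j, hij, rfl | rfl | rfl | rfl⟩ | ⟨i, rfl | rfl⟩ <;>
    simp only [Pi.add_apply, Pi.sub_apply, Pi.neg_apply, Pi.smul_apply, smul_eq_mul,
      Finset.sum_add_distrib, Finset.sum_sub_distrib, Finset.sum_neg_distrib, ← Finset.mul_sum,
      sum_eVec] <;> norm_num

lemma fun_of_iso {Φc : Set V} (hne : Φc.Nonempty)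
    (h : (∃ m : ℕ, factorIso R Φc (stdA m)) ∨ (∃ m : ℕ, factorIso R Φc (stdB m)) ∨
      (∃ m : ℕ, factorIso R Φc (stdC m)) ∨ (∃ m : ℕ, factorIso R Φc (stdD m))) :
    ∃ f : V →ₗ[ℝ] ℝ, (∀ β ∈ Φc, f β = 0 ∨ f β = 1 ∨ f β = -1) ∧ ∃ β ∈ Φc, f β ≠ 0 := by
  obtain ⟨x0, hx0⟩ := hne
  rcases h with ⟨m, h⟩ | ⟨m, h⟩ | ⟨m, h⟩ | ⟨m, h⟩
  · obtain ⟨φ, ψ, hφ, hψ, hp⟩ := iso_inv h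
    obtain ⟨i, j, hij, _⟩ := hφ x0 hx0
    have hmem : ∀ l, l ≠ i → eVec i - eVec l ∈ stdA m := fun l hl => ⟨i, l, hl.symm, rfl⟩
    let f : V →ₗ[ℝ] ℝ := ((m:ℝ) + 1)⁻¹ • ∑ l ∈ Finset.univ.erase i, R.pairing (ψ (eVec i - eVec l))
    have hf : ∀ x ∈ Φc, f x = φ x i := by
      intro x hx
      have h1 : ∑ l ∈ Finset.univ.erase i, R.pairing (ψ (eVec i - eVec l)) x =
          ∑ l ∈ Finset.univ.erase i, (φ x i - φ x l) := by
        apply Finset.sum_congr rfl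
        intro l hl
        have hl' := Finset.ne_of_mem_erase hl
        rw [hp _ (hmem l hl') x hx, pair_sub hl'.symm]
      have h2 := Finset.sum_erase (f := fun l => φ x i - φ x l) Finset.univ (a := i) (sub_self _)
      have h3 := (coordA (hφ x hx) i).2
      simp only [f, LinearMap.smul_apply, LinearMap.sum_apply, smul_eq_mul]
      rw [h1, h2, Finset.sum_sub_distrib, h3]
      simp only [Finset.sum_const, Finset.card_univ, Fintype.card_fin, nsmul_eq_mul]
      push_cast
      have : (m:ℝ) + 1 ≠ 0 := by positivity
      field_simp
      ring
    refine ⟨f, fun β hβ => ?_, ψ (eVec i - eVec j), (hψ _ (hmem j hij.symm)).1, ?_⟩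
    · rw [hf β hβ]; exact (coordA (hφ β hβ) i).1
    · rw [hf _ (hψ _ (hmem j hij.symm)).1, (hψ _ (hmem j hij.symm)).2]
      simp [eVec_same, eVec_ne hij.symm]
  · obtain ⟨φ, ψ, hφ, hψ, hp⟩ := iso_inv h
    have : ∃ i : Fin m, True := by
      rcases hφ x0 hx0 with ⟨i, _⟩ | ⟨i, _⟩ <;> exact ⟨i, trivial⟩
    obtain ⟨i, _⟩ := this
    have hmem : eVec i ∈ stdB m := Or.inr ⟨i, Or.inl rfl⟩
    have hf : ∀ x ∈ Φc, ((1/2:ℝ) • R.pairing (ψ (eVec i))) x = φ x i := by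
      intro x hx
      rw [LinearMap.smul_apply, hp _ hmem x hx, pair_one, smul_eq_mul]; ring
    refine ⟨(1/2:ℝ) • R.pairing (ψ (eVec i)), fun β hβ => ?_, ψ (eVec i), (hψ _ hmem).1, ?_⟩
    · rw [hf β hβ]; exact coordB (hφ β hβ) i
    · rw [hf _ (hψ _ hmem).1, (hψ _ hmem).2, eVec_same]; norm_num
  · obtain ⟨φ, ψ, hφ, hψ, hp⟩ := iso_inv h
    have : ∃ i : Fin m, True := by
      rcases hφ x0 hx0 with ⟨i, _⟩ | ⟨i, _⟩ <;> exact ⟨i, trivial⟩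
    obtain ⟨i, _⟩ := this
    have hmem : ∀ i, (2:ℝ) • eVec i ∈ stdC m := fun i => Or.inr ⟨i, Or.inl rfl⟩
    have hf : ∀ x ∈ Φc, ((1/2:ℝ) • ∑ i, R.pairing (ψ ((2:ℝ) • eVec i))) x =
        (1/2) * ∑ i, φ x i := by
      intro x hx
      rw [LinearMap.smul_apply, LinearMap.sum_apply, smul_eq_mul]
      congr 1
      exact Finset.sum_congr rfl fun i _ => by rw [hp _ (hmem i) x hx, pair_two]
    refine ⟨(1/2:ℝ) • ∑ i, R.pairing (ψ ((2:ℝ) • eVec i)), fun β hβ => ?_,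
      ψ ((2:ℝ) • eVec i), (hψ _ (hmem i)).1, ?_⟩
    · rw [hf β hβ]; exact coordC (hφ β hβ)
    · rw [hf _ (hψ _ (hmem i)).1, (hψ _ (hmem i)).2]
      simp only [Pi.smul_apply, smul_eq_mul, ← Finset.mul_sum, sum_eVec]
      norm_num
  · obtain ⟨φ, ψ, hφ, hψ, hp⟩ := iso_inv h
    obtain ⟨i, j, hij, _⟩ := hφ x0 hx0
    have hm1 : eVec i + eVec j ∈ stdD m := ⟨i, j, hij, Or.inl rfl⟩
    have hm2 : eVec i - eVec j ∈ stdD m := ⟨i, j, hij, Or.inr (Or.inl rfl)⟩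
    have hf : ∀ x ∈ Φc, ((1/2:ℝ) • (R.pairing (ψ (eVec i + eVec j)) +
        R.pairing (ψ (eVec i - eVec j)))) x = φ x i := by
      intro x hx
      rw [LinearMap.smul_apply, LinearMap.add_apply, hp _ hm1 x hx, hp _ hm2 x hx, pair_add hij,
        pair_sub hij, smul_eq_mul]
      ring
    refine ⟨(1/2:ℝ) • (R.pairing (ψ (eVec i + eVec j)) + R.pairing (ψ (eVec i - eVec j))),
      fun β hβ => ?_, ψ (eVec i + eVec j), (hψ _ hm1).1, ?_⟩
    rotate_left
    · rw [hf _ (hψ _ hm1).1, (hψ _ hm1).2]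
      simp [eVec_same, eVec_ne hij.symm]
    · rw [hf β hβ]; exact coordD (hφ β hβ) i

lemma minuscule (hB : IsBase R Pos Δ) (hF : IsFactorDecomp R Δ parts)
    (hH : IsHighestRootData R Pos parts hr hco) (hcl : NoExceptionalFactor R parts) (c : ι) :
    ∃ a ∈ parts c, hco c a = 1 := by
  obtain ⟨a, ha⟩ := hF.nonempty c
  obtain ⟨f, hf, hf0⟩ := fun_of_iso ⟨a, simple_factor hB hF ha⟩ (hcl c)
  exact minuscule_of hB hF hH f hf hf0

lemma reach_main (hB : IsBase R Pos Δ) (hF : IsFactorDecomp R Δ parts)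
    (hH : IsHighestRootData R Pos parts hr hco) (hcl : NoExceptionalFactor R parts)
    {w0 w : V ≃ₗ[ℝ] V} (hw0 : w0 ∈ weylGroup R) (hw : w ∈ weylGroup R) :
    Relation.ReflTransGen (Step R Pos Δ (WOmega R Δ parts hco)) w0 w := by
  have hPf : Pos.Finite := R.finite.subset hB.pos_sub
  let μ : V →ₗ[ℝ] ℝ := ∑ a ∈ dset hB, cf hB a
  have hint : ∀ γ ∈ Pos, ∃ k : ℕ, μ γ = k ∧ 1 ≤ k := by
    intro γ hγ
    choose k hk using fun a => pos_nat hB hγ a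
    refine ⟨∑ a ∈ dset hB, k a, ?_, ?_⟩
    · simp only [μ, LinearMap.sum_apply, hk]; push_cast; rfl
    · obtain ⟨a, ha, h⟩ := exists_cf_pos hB hγ
      rw [hk] at h
      have h1 : 0 < k a := by exact_mod_cast h
      have h2 := Finset.single_le_sum (f := k) (fun _ _ => Nat.zero_le _) ((mem_dset hB).2 ha)
      omega
  obtain ⟨n, hn⟩ := exists_nat_gt (∑ γ ∈ hPf.toFinset, (μ γ - ind Pos (w0 γ)))
  obtain ⟨w', hw', hre, μ', hμ'⟩ := descent hB hF hH (minuscule hB hF hH hcl) hPf.toFinset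
    (fun x => hPf.mem_toFinset) n w0 μ hw0
    (fun γ hγ => by obtain ⟨k, hk, _⟩ := hint γ hγ; exact ⟨k, by rw [hk]; simp⟩)
    (fun γ hγ => by
      obtain ⟨k, hk, h1⟩ := hint γ hγ
      have : (1:ℝ) ≤ k := by exact_mod_cast h1
      rw [hk]
      unfold ind
      split_ifs <;> linarith) hn
  have hO := omega_mem hB hF hH _ w' μ' hw' rfl hμ'
  have s : Step R Pos Δ (WOmega R Δ parts hco) w' 1 := Or.inl ⟨w'⁻¹, inv_mem hO, by simp⟩
  exact (hre.tail s).trans (reach_one hB _ hw)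

end Aux6


/-- Suppose every irreducible factor of `Φ` is of type `A`, `B`, `C` or
`D`.  Then for every `J ⊆ Δ` and every `w ∈ W^J` there are `t ≥ 0` and a sequence
`w_0, w_1, …, w_t` in `W` with `(w_0)^J = z^J = w_Δ w_J` and `(w_t)^J = w`, such that
for every `1 ≤ i ≤ t` either `(w_i)^J = (u w_{i−1})^J` for some `u ∈ W_Ω`, or both
`ℓ((w_{i−1})^J) < ℓ((w_i)^J)` and `(w_i)^J = (s w_{i−1})^J` for some `s ∈ S`. -/
theorem statement_12 {V : Type} [AddCommGroup V] [Module ℝ V]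
    (R : RootSystemData V) (Pos Δ : Set V) (hBase : IsBase R Pos Δ)
    {ι : Type} [Fintype ι] (parts : ι → Set V)
    (hparts : IsFactorDecomp R Δ parts)
    (hr : ι → V) (hco : ι → (V →₀ ℕ))
    (hhr : IsHighestRootData R Pos parts hr hco)
    (hclassical : NoExceptionalFactor R parts)
    (J : Set V) (hJ : J ⊆ Δ)
    (pJ : (V ≃ₗ[ℝ] V) → (V ≃ₗ[ℝ] V)) (hpJ : IsProjJ R Pos J pJ)
    (wD : V ≃ₗ[ℝ] V) (hwD : IsLongestIn R Δ (weylGroup R) wD)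
    (wJ : V ≃ₗ[ℝ] V) (hwJ : IsLongestIn R Δ (WsubJ R J) wJ)
    (w : V ≃ₗ[ℝ] V) (hw : w ∈ WupJ R Pos J) :
    ∃ (t : ℕ) (ws : ℕ → (V ≃ₗ[ℝ] V)),
      (∀ i, i ≤ t → ws i ∈ weylGroup R) ∧
      pJ (ws 0) = wD * wJ ∧ pJ (ws t) = w ∧
      ∀ i, 1 ≤ i → i ≤ t →
        (∃ u ∈ WOmega R Δ parts hco, pJ (ws i) = pJ (u * ws (i - 1))) ∨
        (len R Δ (pJ (ws (i - 1))) < len R Δ (pJ (ws i)) ∧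
          ∃ s ∈ refls R Δ, pJ (ws i) = pJ (s * ws (i - 1))) := by
  exact final_aux hBase (WOmega R Δ parts hco) (WOmega_le hBase hparts) hJ hpJ hwD hwJ hw
    (reach_main hBase hparts hhr hclassical hwD.1 hw.1)

end PaperSp
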